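/- arXiv:1810.06039 — 3 statements merged into one kernel-verified Lean document; each statement's English description precedes it below -/
import Mathlib

section
/- Quasi-minimality of mean values for powers: Let p ≥ 1 and α ≥ 1/p. Then there exists a constant c = c(α,p) such that whenever A ⊆ B ⊂ ℝ^k, k ∈ ℕ, are two bounded domains of positive Lebesgue measure, then for any function u ∈ L^{αp}(B;ℝ^N) and any constant a ∈ ℝ^N one has ⨍_B |u^⟨α⟩ − ((u)_A)^⟨α⟩|^p dx ≤ (c|B|/|A|) ⨍_B |u^⟨α⟩ − a^⟨α⟩|^p dx. -/
open MeasureTheory Set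
open scoped ENNReal

noncomputable section

abbrev Vec (N : ℕ) := EuclideanSpace ℝ (Fin N)

/-- The power `w^⟨α⟩ := |w|^{α−1} w` of a vector (interpreted as `0` when `w = 0`). -/
def pw {N : ℕ} (α : ℝ) (w : Vec N) : Vec N := ‖w‖ ^ (α - 1) • w

/-! With `w^⟨α⟩ := ‖w‖^(α-1) w`, the difference `‖x^⟨α⟩ - a^⟨α⟩‖` is comparable, up to factors
depending only on `α`, to the modulus `max ‖x‖ ‖a‖ ^ (α-1) * ‖x - a‖`: the upper bound is
Bernoulli's inequality, and the lower bound is the upper bound for the inverse map `(·)^⟨α⁻¹⟩`.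
Since `p ≥ 1` and `α p ≥ 1`, the `p`-th power of the modulus divided by `‖x - a‖` is almost
increasing in `‖x - a‖`. The points with `‖u - a‖ ≥ ‖(u)_A - a‖ / 2` contribute at least half of
`‖(u)_A - a‖` to the mean of `‖u - a‖` over `A`, so almost-monotonicity on them alone bounds
`‖(u)_A^⟨α⟩ - a^⟨α⟩‖ ^ p` by a constant times `⨍_A ‖u^⟨α⟩ - a^⟨α⟩‖ ^ p`. Enlarging `A` to `B` costs
the factor `|B| / |A|`, and the triangle inequality replaces `a^⟨α⟩` by `(u)_A^⟨α⟩`. -/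

section RealPowers

theorem abs_rpow_sub_self_le {α q : ℝ} (hα : 0 ≤ α) (hq₀ : 0 ≤ q) (hq₁ : q ≤ 1) :
    |q ^ α - q| ≤ |α - 1| * (1 - q) := by
  rcases le_total 1 α with h | h
  · have bernoulli := one_add_mul_self_le_rpow_one_add (s := q - 1) (by linarith) h
    rw [add_sub_cancel] at bernoulli
    rw [abs_of_nonpos (sub_nonpos.2 (Real.rpow_le_self_of_le_one hq₀ hq₁ h)),
      abs_of_nonneg (sub_nonneg.2 h)]
    linarith
  · have bernoulli := rpow_one_add_le_one_add_mul_self (s := q - 1) (by linarith) hα h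
    rw [add_sub_cancel] at bernoulli
    rw [abs_of_nonneg (sub_nonneg.2 (Real.self_le_rpow_of_le_one hq₀ hq₁ h)),
      abs_of_nonpos (sub_nonpos.2 h)]
    linarith

theorem abs_rpow_sub_one_sub_rpow_sub_one_mul_le {α r s : ℝ} (hα : 0 ≤ α) (hs : 0 ≤ s)
    (hsr : s ≤ r) :
    |r ^ (α - 1) - s ^ (α - 1)| * s ≤ |α - 1| * r ^ (α - 1) * (r - s) := by
  rcases hs.eq_or_lt with rfl | hs
  · simp only [mul_zero, sub_zero]
    positivity
  have hr : 0 < r := hs.trans_le hsr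
  obtain ⟨q, hq, rfl⟩ : ∃ q, 0 < q ∧ s = r * q := ⟨s / r, div_pos hs hr, by field_simp⟩
  have hq₁ : q ≤ 1 := by simpa [hr] using hsr
  have homogeneous :
      (r ^ (α - 1) - (r * q) ^ (α - 1)) * (r * q) = r ^ (α - 1) * r * (q - q ^ α) := by
    rw [Real.mul_rpow hr.le hq.le, Real.rpow_sub_one hq.ne']
    field_simp
  calc |r ^ (α - 1) - (r * q) ^ (α - 1)| * (r * q)
      = r ^ (α - 1) * r * |q ^ α - q| := by
        rw [← abs_of_pos hs, ← abs_mul, abs_of_pos hs, homogeneous, abs_mul,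
          abs_of_pos (by positivity), abs_sub_comm]
    _ ≤ r ^ (α - 1) * r * (|α - 1| * (1 - q)) := by
        gcongr
        exact abs_rpow_sub_self_le hα hq.le hq₁
    _ = |α - 1| * r ^ (α - 1) * (r - r * q) := by ring

theorem rpow_sub_one_mul_rpow {α p m t : ℝ} (hm : 0 < m) (ht : 0 < t) :
    (m ^ (α - 1) * t) ^ p = t * (t / m) ^ (p - 1) * m ^ (α * p - 1) := by
  rw [Real.mul_rpow (by positivity) ht.le, Real.div_rpow ht.le hm.le, ← Real.rpow_mul hm.le,
    Real.rpow_sub_one ht.ne', show (α - 1) * p = (α * p - 1) - (p - 1) by ring,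
    Real.rpow_sub hm]
  field_simp

theorem rpow_sub_one_mul_rpow_mul_le {α p c d m n s t : ℝ} (hp : 1 ≤ p) (hαp : 1 ≤ α * p)
    (hc : 0 ≤ c) (hd : 0 ≤ d) (hm : 0 < m) (hn : 0 < n) (hs : 0 < s) (ht : 0 < t)
    (hratio : s / m ≤ c * (t / n)) (hmn : m ≤ d * n) :
    (m ^ (α - 1) * s) ^ p * t ≤
      c ^ (p - 1) * d ^ (α * p - 1) * s * (n ^ (α - 1) * t) ^ p := by
  have : 0 ≤ p - 1 := sub_nonneg.2 hp
  have : 0 ≤ α * p - 1 := sub_nonneg.2 hαp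
  rw [rpow_sub_one_mul_rpow hm hs, rpow_sub_one_mul_rpow hn ht]
  calc s * (s / m) ^ (p - 1) * m ^ (α * p - 1) * t
      ≤ s * (c * (t / n)) ^ (p - 1) * (d * n) ^ (α * p - 1) * t := by gcongr
    _ = c ^ (p - 1) * d ^ (α * p - 1) * s * (t * (t / n) ^ (p - 1) * n ^ (α * p - 1)) := by
        rw [Real.mul_rpow hc (by positivity), Real.mul_rpow hd hn.le]
        ring

end RealPowers

section MaxNorm

variable {E : Type*} [SeminormedAddCommGroup E]

theorem norm_sub_rpow_le {p : ℝ} (hp : 1 ≤ p) (x y z : E) :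
    ‖x - z‖ ^ p ≤ 2 ^ (p - 1) * (‖x - y‖ ^ p + ‖z - y‖ ^ p) := by
  have htri : ‖x - z‖ ≤ ‖x - y‖ + ‖z - y‖ := by
    simpa only [norm_sub_rev z y] using norm_sub_le_norm_sub_add_norm_sub x y z
  calc ‖x - z‖ ^ p ≤ (‖x - y‖ + ‖z - y‖) ^ p := by gcongr
    _ ≤ 2 ^ (p - 1) * (‖x - y‖ ^ p + ‖z - y‖ ^ p) :=
      mod_cast NNReal.rpow_add_le_mul_rpow_add_rpow ‖x - y‖₊ ‖z - y‖₊ hp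

theorem norm_sub_le_two_mul_max (x a : E) : ‖x - a‖ ≤ 2 * max ‖x‖ ‖a‖ := by
  linarith [norm_sub_le x a, le_max_left ‖x‖ ‖a‖, le_max_right ‖x‖ ‖a‖]

theorem max_norm_le_norm_sub_add (x a : E) : max ‖x‖ ‖a‖ ≤ ‖x - a‖ + ‖a‖ :=
  max_le (norm_le_norm_sub_add x a) (le_add_of_nonneg_left (norm_nonneg _))

theorem max_norm_le_five_mul_max_norm {a b x : E} (h : ‖b - a‖ ≤ 2 * ‖x - a‖) :
    max ‖b‖ ‖a‖ ≤ 5 * max ‖x‖ ‖a‖ := by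
  linarith [max_norm_le_norm_sub_add b a, norm_sub_le_two_mul_max x a, le_max_right ‖x‖ ‖a‖]

theorem norm_sub_mul_max_norm_le {a b x : E} (h : ‖b - a‖ ≤ 2 * ‖x - a‖) :
    ‖b - a‖ * max ‖x‖ ‖a‖ ≤ 4 * ‖x - a‖ * max ‖b‖ ‖a‖ :=
  calc ‖b - a‖ * max ‖x‖ ‖a‖
      ≤ ‖b - a‖ * ‖x - a‖ + ‖b - a‖ * ‖a‖ := by
        rw [← mul_add]
        gcongr
        exact max_norm_le_norm_sub_add x a
    _ ≤ 2 * max ‖b‖ ‖a‖ * ‖x - a‖ + 2 * ‖x - a‖ * max ‖b‖ ‖a‖ := by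
        gcongr
        · exact norm_sub_le_two_mul_max b a
        · exact le_max_right _ _
    _ = 4 * ‖x - a‖ * max ‖b‖ ‖a‖ := by ring

theorem max_norm_rpow_mul_norm_sub_rpow_mul_le {α p : ℝ} (hp : 1 ≤ p) (hαp : 1 ≤ α * p)
    {a b x : E} (hb : 0 < ‖b - a‖) (h : ‖b - a‖ ≤ 2 * ‖x - a‖) :
    (max ‖b‖ ‖a‖ ^ (α - 1) * ‖b - a‖) ^ p * ‖x - a‖ ≤
      4 ^ (p - 1) * 5 ^ (α * p - 1) * ‖b - a‖ * (max ‖x‖ ‖a‖ ^ (α - 1) * ‖x - a‖) ^ p := by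
  have hx : 0 < ‖x - a‖ := by linarith
  have hmb : 0 < max ‖b‖ ‖a‖ := by linarith [norm_sub_le_two_mul_max b a]
  have hmx : 0 < max ‖x‖ ‖a‖ := by linarith [norm_sub_le_two_mul_max x a]
  refine rpow_sub_one_mul_rpow_mul_le hp hαp (by norm_num) (by norm_num) hmb hmx hb hx ?_
    (max_norm_le_five_mul_max_norm h)
  rw [← mul_div_assoc, div_le_div_iff₀ hmb hmx]
  exact norm_sub_mul_max_norm_le h

end MaxNorm

section RadialPow

variable {E : Type*} [NormedAddCommGroup E] [NormedSpace ℝ E]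

/-- The power `w^⟨α⟩ := ‖w‖^(α-1) w` in an arbitrary normed space; on `Vec N` it is `pw`. Despite
the convention `0 ^ 0 = 1` it vanishes at `w = 0` for every `α`. -/
def radialPow (α : ℝ) (w : E) : E := ‖w‖ ^ (α - 1) • w

theorem norm_radialPow {α : ℝ} (hα : α ≠ 0) (w : E) : ‖radialPow α w‖ = ‖w‖ ^ α := by
  rcases eq_or_ne w 0 with rfl | hw
  · simp [radialPow, Real.zero_rpow hα]
  · have hw' : ‖w‖ ≠ 0 := norm_ne_zero_iff.2 hw
    rw [radialPow, norm_smul, Real.norm_of_nonneg (by positivity), Real.rpow_sub_one hw',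
      div_mul_cancel₀ _ hw']

theorem radialPow_one (w : E) : radialPow 1 w = w := by
  simp [radialPow]

theorem radialPow_radialPow {α : ℝ} (hα : α ≠ 0) (β : ℝ) (w : E) :
    radialPow β (radialPow α w) = radialPow (α * β) w := by
  rcases eq_or_ne w 0 with rfl | hw
  · simp [radialPow]
  · have hw' : 0 < ‖w‖ := norm_pos_iff.2 hw
    rw [radialPow, norm_radialPow hα, radialPow, radialPow, smul_smul, ← Real.rpow_mul hw'.le,
      ← Real.rpow_add hw']
    congr 2
    ring

theorem norm_radialPow_sub_le {α : ℝ} (hα : 0 ≤ α) (x y : E) :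
    ‖radialPow α x - radialPow α y‖ ≤
      (1 + |α - 1|) * (max ‖x‖ ‖y‖ ^ (α - 1) * ‖x - y‖) := by
  wlog h : ‖y‖ ≤ ‖x‖ generalizing x y
  · rw [norm_sub_rev, norm_sub_rev x, max_comm]
    exact this y x (le_of_not_ge h)
  rw [max_eq_left h]
  have hsplit : radialPow α x - radialPow α y
      = ‖x‖ ^ (α - 1) • (x - y) + (‖x‖ ^ (α - 1) - ‖y‖ ^ (α - 1)) • y := by
    simp only [radialPow]
    module
  calc ‖radialPow α x - radialPow α y‖
      ≤ ‖x‖ ^ (α - 1) * ‖x - y‖ + |‖x‖ ^ (α - 1) - ‖y‖ ^ (α - 1)| * ‖y‖ := by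
        rw [hsplit]
        refine (norm_add_le _ _).trans_eq ?_
        rw [norm_smul, norm_smul, Real.norm_of_nonneg (by positivity), Real.norm_eq_abs]
    _ ≤ ‖x‖ ^ (α - 1) * ‖x - y‖ + |α - 1| * ‖x‖ ^ (α - 1) * (‖x‖ - ‖y‖) := by
        gcongr _ + ?_
        exact abs_rpow_sub_one_sub_rpow_sub_one_mul_le hα (norm_nonneg y) h
    _ ≤ ‖x‖ ^ (α - 1) * ‖x - y‖ + |α - 1| * ‖x‖ ^ (α - 1) * ‖x - y‖ := by
        gcongr
        exact norm_sub_norm_le x y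
    _ = (1 + |α - 1|) * (‖x‖ ^ (α - 1) * ‖x - y‖) := by ring

theorem max_norm_rpow_mul_norm_sub_le {α : ℝ} (hα : 0 < α) (x y : E) :
    max ‖x‖ ‖y‖ ^ (α - 1) * ‖x - y‖ ≤
      (1 + |α⁻¹ - 1|) * ‖radialPow α x - radialPow α y‖ := by
  rcases eq_or_ne x y with rfl | hxy
  · simp
  have hm : 0 < max ‖x‖ ‖y‖ := by
    linarith [norm_sub_le_two_mul_max x y, norm_pos_iff.2 (sub_ne_zero.2 hxy)]
  have hinv := norm_radialPow_sub_le (inv_nonneg.2 hα.le) (radialPow α x) (radialPow α y)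
  simp only [radialPow_radialPow hα.ne', mul_inv_cancel₀ hα.ne', radialPow_one,
    norm_radialPow hα.ne', ← Real.rpow_max (norm_nonneg x) (norm_nonneg y) hα.le] at hinv
  set m := max ‖x‖ ‖y‖
  have hcancel : m ^ (α - 1) * (m ^ α) ^ (α⁻¹ - 1) = 1 := by
    rw [← Real.rpow_mul hm.le, ← Real.rpow_add hm, mul_sub, mul_inv_cancel₀ hα.ne', mul_one,
      sub_add_sub_cancel, sub_self, Real.rpow_zero]
  calc m ^ (α - 1) * ‖x - y‖
      ≤ m ^ (α - 1) * ((1 + |α⁻¹ - 1|) *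
          ((m ^ α) ^ (α⁻¹ - 1) * ‖radialPow α x - radialPow α y‖)) := by gcongr
    _ = m ^ (α - 1) * (m ^ α) ^ (α⁻¹ - 1) *
          ((1 + |α⁻¹ - 1|) * ‖radialPow α x - radialPow α y‖) := by ring
    _ = (1 + |α⁻¹ - 1|) * ‖radialPow α x - radialPow α y‖ := by rw [hcancel, one_mul]

/-- The constant by which `‖x^⟨α⟩ - a^⟨α⟩‖ ^ p / ‖x - a‖` fails to be increasing in `‖x - a‖`: the
first factor compares `‖x^⟨α⟩ - a^⟨α⟩‖` with the modulus `max ‖x‖ ‖a‖ ^ (α - 1) * ‖x - a‖` in both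
directions, the other two are the almost-monotonicity of that modulus. -/
def almostMonoConst (p α : ℝ) : ℝ :=
  ((1 + |α - 1|) * (1 + |α⁻¹ - 1|)) ^ p * (4 ^ (p - 1) * 5 ^ (α * p - 1))

theorem almostMonoConst_pos (p α : ℝ) : 0 < almostMonoConst p α := by
  unfold almostMonoConst
  positivity

theorem norm_radialPow_sub_rpow_mul_le {p α : ℝ} (hp : 1 ≤ p) (hαp : 1 ≤ α * p)
    {a b x : E} (hb : 0 < ‖b - a‖) (h : ‖b - a‖ ≤ 2 * ‖x - a‖) :
    ‖radialPow α b - radialPow α a‖ ^ p * ‖x - a‖ ≤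
      ‖b - a‖ * (almostMonoConst p α * ‖radialPow α x - radialPow α a‖ ^ p) := by
  have hα : 0 < α := pos_of_mul_pos_left (zero_lt_one.trans_le hαp) (zero_le_one.trans hp)
  calc ‖radialPow α b - radialPow α a‖ ^ p * ‖x - a‖
      ≤ ((1 + |α - 1|) * (max ‖b‖ ‖a‖ ^ (α - 1) * ‖b - a‖)) ^ p * ‖x - a‖ := by
        gcongr
        exact norm_radialPow_sub_le hα.le b a
    _ = (1 + |α - 1|) ^ p * ((max ‖b‖ ‖a‖ ^ (α - 1) * ‖b - a‖) ^ p * ‖x - a‖) := by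
        rw [Real.mul_rpow (by positivity) (by positivity), mul_assoc]
    _ ≤ (1 + |α - 1|) ^ p * (4 ^ (p - 1) * 5 ^ (α * p - 1) * ‖b - a‖ *
          (max ‖x‖ ‖a‖ ^ (α - 1) * ‖x - a‖) ^ p) := by
        gcongr ?_ * ?_
        exact max_norm_rpow_mul_norm_sub_rpow_mul_le hp hαp hb h
    _ ≤ (1 + |α - 1|) ^ p * (4 ^ (p - 1) * 5 ^ (α * p - 1) * ‖b - a‖ *
          ((1 + |α⁻¹ - 1|) * ‖radialPow α x - radialPow α a‖) ^ p) := by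
        gcongr _ * (_ * ?_ ^ p)
        exact max_norm_rpow_mul_norm_sub_le hα x a
    _ = ‖b - a‖ * (almostMonoConst p α * ‖radialPow α x - radialPow α a‖ ^ p) := by
        rw [almostMonoConst, Real.mul_rpow (by positivity) (by positivity),
          Real.mul_rpow (by positivity) (by positivity)]
        ring

end RadialPow

section Averages

variable {Ω : Type*} [MeasurableSpace Ω] {μ : Measure Ω}

theorem setAverage_le_measureReal_div_mul_setAverage {A B : Set Ω} {f : Ω → ℝ} (hAB : A ⊆ B)
    (hB : μ B ≠ ∞) (hf : IntegrableOn f B μ) (hf₀ : 0 ≤ f) :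
    ⨍ x in A, f x ∂μ ≤ μ.real B / μ.real A * ⨍ x in B, f x ∂μ :=
  calc ⨍ x in A, f x ∂μ = (μ.real A)⁻¹ * ∫ x in A, f x ∂μ := setAverage_eq μ f A
    _ ≤ (μ.real A)⁻¹ * ∫ x in B, f x ∂μ := by
        gcongr ?_ * ?_
        exact setIntegral_mono_set hf (.of_forall hf₀) hAB.eventuallyLE
    _ = μ.real B / μ.real A * ⨍ x in B, f x ∂μ := by
        rw [← measure_smul_setAverage f hB, smul_eq_mul]
        ring

theorem le_two_mul_integral_of_mul_le [IsProbabilityMeasure μ] {L s : ℝ} {f g : Ω → ℝ}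
    (hL : 0 ≤ L) (hs : 0 < s) (hf : Integrable f μ) (hg : Integrable g μ) (hg₀ : 0 ≤ g)
    (hsf : s ≤ ∫ x, f x ∂μ) (hfg : ∀ x, s ≤ 2 * f x → L * f x ≤ s * g x) :
    L ≤ 2 * ∫ x, g x ∂μ := by
  have hpointwise : ∀ x, L * f x ≤ s * g x + L * (s / 2) := by
    intro x
    have hgx : 0 ≤ s * g x := mul_nonneg hs.le (hg₀ x)
    rcases le_total s (2 * f x) with h | h
    · linarith [hfg x h, mul_nonneg hL hs.le]
    · have : L * f x ≤ L * (s / 2) := by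
        gcongr
        linarith
      linarith
  have hmean : L * s ≤ s * ∫ x, g x ∂μ + L * (s / 2) :=
    calc L * s ≤ L * ∫ x, f x ∂μ := by gcongr
      _ = ∫ x, L * f x ∂μ := (integral_const_mul L f).symm
      _ ≤ ∫ x, (s * g x + L * (s / 2)) ∂μ :=
        integral_mono (hf.const_mul L) ((hg.const_mul s).add (integrable_const _)) hpointwise
      _ = s * ∫ x, g x ∂μ + L * (s / 2) := by
        rw [integral_add (hg.const_mul s) (integrable_const _), integral_const_mul]
        simp
  refine le_of_mul_le_mul_right ?_ hs
  linarith

variable {F : Type*} [NormedAddCommGroup F]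

theorem integrable_norm_sub_rpow [IsFiniteMeasure μ] {p : ℝ} (hp : 0 < p) {v : Ω → F}
    (hv : MemLp v (ENNReal.ofReal p) μ) (w : F) :
    Integrable (fun x => ‖v x - w‖ ^ p) μ := by
  have h := (hv.sub (memLp_const w)).integrable_norm_rpow (by simpa using hp)
    ENNReal.ofReal_ne_top
  rwa [ENNReal.toReal_ofReal hp.le] at h

theorem integral_norm_sub_rpow_le [IsProbabilityMeasure μ] {p : ℝ} (hp : 1 ≤ p) {v : Ω → F}
    (hv : MemLp v (ENNReal.ofReal p) μ) (w y : F) :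
    ∫ x, ‖v x - w‖ ^ p ∂μ ≤ 2 ^ (p - 1) * (∫ x, ‖v x - y‖ ^ p ∂μ + ‖w - y‖ ^ p) := by
  have hint := integrable_norm_sub_rpow (zero_lt_one.trans_le hp) hv
  calc ∫ x, ‖v x - w‖ ^ p ∂μ ≤ ∫ x, 2 ^ (p - 1) * (‖v x - y‖ ^ p + ‖w - y‖ ^ p) ∂μ :=
        integral_mono (hint w) (((hint y).add (integrable_const _)).const_mul _)
          fun x => norm_sub_rpow_le hp (v x) y w
    _ = 2 ^ (p - 1) * (∫ x, ‖v x - y‖ ^ p ∂μ + ‖w - y‖ ^ p) := by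
        rw [integral_const_mul, integral_add (hint y) (integrable_const _)]
        simp

end Averages

section MeanValue

variable {Ω : Type*} [MeasurableSpace Ω] {μ : Measure Ω}
  {E : Type*} [NormedAddCommGroup E] [NormedSpace ℝ E] {p α : ℝ} {u : Ω → E}

theorem memLp_radialPow_comp (hα : 0 < α) (hu : MemLp u (ENNReal.ofReal (α * p)) μ) :
    MemLp (fun x => radialPow α (u x)) (ENNReal.ofReal p) μ := by
  have hpow := hu.norm_rpow_div (ENNReal.ofReal α)
  rw [ENNReal.toReal_ofReal hα.le, ← ENNReal.ofReal_div_of_pos hα,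
    mul_div_cancel_left₀ _ hα.ne'] at hpow
  have hmeas : AEStronglyMeasurable (fun x => radialPow α (u x)) μ :=
    (hu.1.norm.aemeasurable.pow_const (α - 1)).aestronglyMeasurable.smul hu.1
  refine hpow.of_le hmeas (.of_forall fun x => ?_)
  rw [norm_radialPow hα.ne']
  exact le_abs_self _

theorem norm_radialPow_integral_sub_rpow_le [CompleteSpace E] [IsProbabilityMeasure μ]
    (hp : 1 ≤ p) (hαp : 1 ≤ α * p) (hu : MemLp u (ENNReal.ofReal (α * p)) μ) (a : E) :
    ‖radialPow α (∫ x, u x ∂μ) - radialPow α a‖ ^ p ≤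
      2 * almostMonoConst p α * ∫ x, ‖radialPow α (u x) - radialPow α a‖ ^ p ∂μ := by
  have hp₀ : 0 < p := zero_lt_one.trans_le hp
  have hα : 0 < α := pos_of_mul_pos_left (zero_lt_one.trans_le hαp) hp₀.le
  have hC := almostMonoConst_pos p α
  have hu₁ : Integrable u μ := hu.integrable (by simpa using hαp)
  have hua : Integrable (fun x => u x - a) μ := hu₁.sub (integrable_const a)
  have hv := integrable_norm_sub_rpow hp₀ (memLp_radialPow_comp hα hu) (radialPow α a)
  set b := ∫ x, u x ∂μ with hb
  rcases (norm_nonneg (b - a)).eq_or_lt with hba | hba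
  · rw [sub_eq_zero.1 (norm_eq_zero.1 hba.symm), sub_self, norm_zero, Real.zero_rpow hp₀.ne']
    positivity
  have hmean : ‖b - a‖ ≤ ∫ x, ‖u x - a‖ ∂μ := by
    have hcentered : ∫ x, (u x - a) ∂μ = b - a := by
      rw [integral_sub hu₁ (integrable_const a), hb]
      simp
    exact hcentered ▸ norm_integral_le_integral_norm _
  rw [mul_assoc, ← integral_const_mul]
  exact le_two_mul_integral_of_mul_le (by positivity) hba hua.norm (hv.const_mul _)
    (fun x => by positivity) hmean fun x => norm_radialPow_sub_rpow_mul_le hp hαp hba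

theorem norm_radialPow_setAverage_sub_rpow_le [CompleteSpace E] (hp : 1 ≤ p) (hαp : 1 ≤ α * p)
    {A B : Set Ω} (hAB : A ⊆ B) (hA : μ A ≠ 0) (hB : μ B ≠ ∞)
    (hu : MemLp u (ENNReal.ofReal (α * p)) (μ.restrict B)) (a : E) :
    ‖radialPow α (⨍ x in A, u x ∂μ) - radialPow α a‖ ^ p ≤
      2 * almostMonoConst p α *
        (μ.real B / μ.real A * ⨍ x in B, ‖radialPow α (u x) - radialPow α a‖ ^ p ∂μ) := by
  have hp₀ : 0 < p := zero_lt_one.trans_le hp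
  have hα : 0 < α := pos_of_mul_pos_left (zero_lt_one.trans_le hαp) hp₀.le
  have hC := almostMonoConst_pos p α
  have : Fact (μ A < ∞) := ⟨(measure_ne_top_of_subset hAB hB).lt_top⟩
  have : Fact (μ B < ∞) := ⟨hB.lt_top⟩
  have : NeZero (μ.restrict A) := ⟨by simpa using hA⟩
  have huA := hu.mono_measure (Measure.restrict_mono hAB le_rfl)
  calc ‖radialPow α (⨍ x in A, u x ∂μ) - radialPow α a‖ ^ p
      ≤ 2 * almostMonoConst p α * ⨍ x in A, ‖radialPow α (u x) - radialPow α a‖ ^ p ∂μ :=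
        norm_radialPow_integral_sub_rpow_le hp hαp (huA.smul_measure (by simpa using hA)) a
    _ ≤ 2 * almostMonoConst p α *
          (μ.real B / μ.real A * ⨍ x in B, ‖radialPow α (u x) - radialPow α a‖ ^ p ∂μ) := by
        gcongr
        exact setAverage_le_measureReal_div_mul_setAverage hAB hB
          (integrable_norm_sub_rpow hp₀ (memLp_radialPow_comp hα hu) _) fun x => by positivity

theorem mean_quasi_minimality_general [CompleteSpace E] (hp : 1 ≤ p) (hα : 1 / p ≤ α)
    {A B : Set Ω} (hAB : A ⊆ B) (hA : μ A ≠ 0) (hB : μ B ≠ ∞)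
    (hu : MemLp u (ENNReal.ofReal (α * p)) (μ.restrict B)) (a : E) :
    ⨍ x in B, ‖radialPow α (u x) - radialPow α (⨍ y in A, u y ∂μ)‖ ^ p ∂μ ≤
      2 ^ (p - 1) * (1 + 2 * almostMonoConst p α) * μ.real B / μ.real A *
        ⨍ x in B, ‖radialPow α (u x) - radialPow α a‖ ^ p ∂μ := by
  have hp₀ : 0 < p := zero_lt_one.trans_le hp
  have hα₀ : 0 < α := (one_div_pos.2 hp₀).trans_le hα
  have hB₀ : μ B ≠ 0 := (hA.bot_lt.trans_le (measure_mono hAB)).ne'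
  have : Fact (μ B < ∞) := ⟨hB.lt_top⟩
  have : NeZero (μ.restrict B) := ⟨by simpa using hB₀⟩
  have hmean := norm_radialPow_setAverage_sub_rpow_le hp ((div_le_iff₀ hp₀).1 hα) hAB hA hB hu a
  set b := ⨍ y in A, u y ∂μ
  set I := ⨍ x in B, ‖radialPow α (u x) - radialPow α a‖ ^ p ∂μ
  have hI : 0 ≤ I := integral_nonneg fun x => by positivity
  have hratio : 1 ≤ μ.real B / μ.real A :=
    (one_le_div (ENNReal.toReal_pos hA (measure_ne_top_of_subset hAB hB))).2
      (measureReal_mono hAB hB)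
  calc ⨍ x in B, ‖radialPow α (u x) - radialPow α b‖ ^ p ∂μ
      ≤ 2 ^ (p - 1) * (I + ‖radialPow α b - radialPow α a‖ ^ p) :=
        integral_norm_sub_rpow_le hp
          ((memLp_radialPow_comp hα₀ hu).smul_measure (by simpa using hB₀)) _ _
    _ ≤ 2 ^ (p - 1) * (μ.real B / μ.real A * I +
          2 * almostMonoConst p α * (μ.real B / μ.real A * I)) := by
        gcongr
        exact le_mul_of_one_le_left hI hratio
    _ = 2 ^ (p - 1) * (1 + 2 * almostMonoConst p α) * μ.real B / μ.real A * I := by ring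

end MeanValue

/-- Quasi-minimality of mean values for powers: let `p ≥ 1` and `α ≥ 1/p`. Then there is a
constant `c = c(α, p)` such that whenever `A ⊆ B ⊂ ℝ^k` are bounded domains of positive
measure, for any `u ∈ L^{αp}(B; ℝ^N)` and any `a ∈ ℝ^N`:
`⨍_B |u^⟨α⟩ − ((u)_A)^⟨α⟩|^p dx ≤ (c|B|/|A|) ⨍_B |u^⟨α⟩ − a^⟨α⟩|^p dx`. -/
theorem mean_quasi_minimality (p α : ℝ) (hp : 1 ≤ p) (hα : 1 / p ≤ α) :
    ∃ c : ℝ, 0 < c ∧ ∀ (k N : ℕ) (A B : Set (EuclideanSpace ℝ (Fin k))),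
      A ⊆ B → IsOpen A → IsConnected A → Bornology.IsBounded A →
      IsOpen B → IsConnected B → Bornology.IsBounded B → 0 < volume A →
      ∀ (u : EuclideanSpace ℝ (Fin k) → Vec N) (a : Vec N),
        MemLp u (ENNReal.ofReal (α * p)) (volume.restrict B) →
        ⨍ x in B, ‖pw α (u x) - pw α (⨍ y in A, u y)‖ ^ p
          ≤ c * (volume B).toReal / (volume A).toReal
              * ⨍ x in B, ‖pw α (u x) - pw α a‖ ^ p := by
  refine ⟨2 ^ (p - 1) * (1 + 2 * almostMonoConst p α), ?_, ?_⟩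
  · have := almostMonoConst_pos p α
    positivity
  · intro k N A B hAB _ _ _ _ _ hB hA u a hu
    exact mean_quasi_minimality_general hp hα hAB hA.ne' hB.measure_lt_top.ne hu a
end
end

section
/- Let p ≥ 1 and α ≥ 1/p. Then there exists a constant c = c(α,p) such that for every bounded domain A ⊂ ℝ^k of positive Lebesgue measure, every u ∈ L^{αp}(A;ℝ^N) and every a ∈ ℝ^N one has |((u)_A)^⟨α⟩ − a^⟨α⟩|^p ≤ c ⨍_A |u^⟨α⟩ − a^⟨α⟩|^p dx. -/
open MeasureTheory Set
open scoped ENNReal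

noncomputable section

/- The increments of `V w = ‖w‖ ^ (α - 1) • w` satisfy `‖V b - V a‖ ≈ ψ ‖b - a‖` with
`ψ t = max ‖a‖ t ^ (α - 1) * t`; the lower bound is the upper bound for the inverse map, which is
the signed power with exponent `α⁻¹`. Although `ψ ^ p` need not be convex, `p ≥ 1` and `α p ≥ 1`
make `ψ t ^ p / t` nondecreasing, so that the line `t ↦ (ψ c ^ p / c) (t - c)` lies below `ψ ^ p`.
Integrating this at `t = ‖u - a‖` with `2 c = ‖(u)_A - a‖` replaces Jensen's inequality at the cost
of a factor `2` in the argument of `ψ`, which is doubling. -/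

section RealPowers

variable {α p s t : ℝ}

lemma rpow_sub_one_mul_self {x : ℝ} (hx : 0 ≤ x) (hα : α ≠ 0) : x ^ (α - 1) * x = x ^ α := by
  rw [← Real.rpow_add_one' hx (by simpa using hα), sub_add_cancel]

lemma rpow_le_rpow_abs_mul_rpow {x y K β : ℝ} (hx : 0 ≤ x) (hy : 0 ≤ y) (hK : 0 ≤ K)
    (hxy : x ≤ K * y) (hyx : y ≤ K * x) : x ^ β ≤ K ^ |β| * y ^ β := by
  rcases le_total 0 β with hβ | hβ
  · rw [abs_of_nonneg hβ, ← Real.mul_rpow hK hy]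
    exact Real.rpow_le_rpow hx hxy hβ
  · have hinv : x⁻¹ ≤ K * y⁻¹ := by
      rcases hy.eq_or_lt with rfl | hy
      · simp [le_antisymm (by simpa using hxy) hx]
      · have hKx : 0 < K * x := hy.trans_le hyx
        have hx' : 0 < x := pos_of_mul_pos_right hKx hK
        have hK' : 0 < K := pos_of_mul_pos_left hKx hx
        rwa [← div_eq_mul_inv, inv_le_comm₀ hx' (by positivity), inv_div, div_le_iff₀' hK']
    rw [abs_of_nonpos hβ, ← neg_neg β, Real.rpow_neg hx, Real.rpow_neg hy, neg_neg,
      ← Real.inv_rpow hx, ← Real.inv_rpow hy, ← Real.mul_rpow hK (by positivity)]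
    exact Real.rpow_le_rpow (by positivity) hinv (by linarith)

lemma rpow_sub_rpow_le (hα : α ≠ 0) (hs : 0 ≤ s) (hst : s ≤ t) :
    t ^ α - s ^ α ≤ max 1 α * (t ^ (α - 1) * (t - s)) := by
  rcases hs.eq_or_lt with rfl | hs
  · rw [Real.zero_rpow hα, sub_zero, sub_zero, rpow_sub_one_mul_self hst hα]
    exact le_mul_of_one_le_left (by positivity) (le_max_left 1 α)
  have ht : 0 < t := hs.trans_le hst
  rcases le_total α 1 with h1 | h1
  · have hanti : t ^ (α - 1) * s ≤ s ^ (α - 1) * s := by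
      gcongr ?_ * s
      exact Real.rpow_le_rpow_of_nonpos hs hst (by linarith)
    rw [max_eq_left h1, ← rpow_sub_one_mul_self ht.le hα, ← rpow_sub_one_mul_self hs.le hα]
    linarith
  · have bernoulli : 1 + α * (s / t - 1) ≤ (s / t) ^ α := by
      simpa using one_add_mul_self_le_rpow_one_add (s := s / t - 1)
        (by linarith [div_nonneg hs.le ht.le]) h1
    rw [max_eq_right h1]
    calc t ^ α - s ^ α = t ^ α * (1 - (s / t) ^ α) := by
          rw [Real.div_rpow hs.le ht.le]; field_simp
      _ ≤ t ^ α * (α * (1 - s / t)) := by gcongr; linarith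
      _ = α * (t ^ (α - 1) * (t - s)) := by
          rw [← rpow_sub_one_mul_self ht.le hα]; field_simp

lemma abs_rpow_sub_one_sub_mul_le (hα : 0 < α) (hs : 0 ≤ s) (hst : s ≤ t) :
    |t ^ (α - 1) - s ^ (α - 1)| * s ≤ max 1 α * (t ^ (α - 1) * (t - s)) := by
  have hd : 0 ≤ t ^ (α - 1) * (t - s) :=
    mul_nonneg (Real.rpow_nonneg (hs.trans hst) _) (sub_nonneg.2 hst)
  calc |t ^ (α - 1) - s ^ (α - 1)| * s
      = |(t ^ α - s ^ α) - t ^ (α - 1) * (t - s)| := by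
        rw [← rpow_sub_one_mul_self hs hα.ne', ← rpow_sub_one_mul_self (hs.trans hst) hα.ne',
          ← abs_of_nonneg hs, ← abs_mul, abs_of_nonneg hs]
        ring_nf
    _ ≤ max 1 α * (t ^ (α - 1) * (t - s)) :=
        abs_sub_le_of_nonneg_of_le (sub_nonneg.2 (Real.rpow_le_rpow hs hst hα.le))
          (rpow_sub_rpow_le hα.ne' hs hst) hd (le_mul_of_one_le_left hd (le_max_left 1 α))

/-- The power `t ↦ t ^ α` shifted by `s`: linear in `t` below the threshold `s`, equal to `t ^ α`
above it. With `s = ‖a‖` it measures the increments of `signedPow α` at `a`. -/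
def shiftedPow (α s t : ℝ) : ℝ := max s t ^ (α - 1) * t

lemma shiftedPow_nonneg (ht : 0 ≤ t) : 0 ≤ shiftedPow α s t :=
  mul_nonneg (Real.rpow_nonneg (le_max_of_le_right ht) _) ht

lemma shiftedPow_zero_right : shiftedPow α s 0 = 0 := mul_zero _

lemma measurable_shiftedPow : Measurable (shiftedPow α s) := by
  unfold shiftedPow
  fun_prop

lemma shiftedPow_two_mul_le (ht : 0 ≤ t) :
    shiftedPow α s (2 * t) ≤ 2 * 2 ^ |α - 1| * shiftedPow α s t := by
  have hmax : max s (2 * t) ^ (α - 1) ≤ 2 ^ |α - 1| * max s t ^ (α - 1) := by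
    have hst : 0 ≤ max s t := le_max_of_le_right ht
    refine rpow_le_rpow_abs_mul_rpow (le_max_of_le_right (by positivity)) hst zero_le_two
      (max_le ?_ ?_) (max_le ?_ ?_)
    all_goals linarith [le_max_left s t, le_max_right s t, le_max_left s (2 * t),
      le_max_right s (2 * t)]
  calc shiftedPow α s (2 * t) ≤ 2 ^ |α - 1| * max s t ^ (α - 1) * (2 * t) := by
        unfold shiftedPow; gcongr
    _ = 2 * 2 ^ |α - 1| * shiftedPow α s t := by unfold shiftedPow; ring

lemma shiftedPow_eq_div_rpow_mul_rpow (ht : 0 < t) :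
    shiftedPow α s t = (t / max s t) ^ (1 - α) * t ^ α := by
  have hm : 0 < max s t := lt_max_of_lt_right ht
  rw [shiftedPow, Real.div_rpow ht.le hm.le, ← neg_sub 1 α, Real.rpow_neg hm.le,
    Real.rpow_sub ht, Real.rpow_one]
  field_simp

lemma div_max_le_div_max {t' : ℝ} (hs : 0 ≤ s) (ht : 0 < t) (htt' : t ≤ t') :
    t / max s t ≤ t' / max s t' := by
  rw [div_le_div_iff₀ (lt_max_of_lt_right ht) (lt_max_of_lt_right (ht.trans_le htt')),
    mul_max_of_nonneg _ _ ht.le, mul_max_of_nonneg _ _ (ht.le.trans htt'), mul_comm t t']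
  gcongr

lemma monotoneOn_shiftedPow_rpow_div (hp : 1 ≤ p) (hαp : 1 ≤ α * p) (hs : 0 ≤ s) :
    MonotoneOn (fun t => shiftedPow α s t ^ p / t) (Ioi 0) := by
  rcases le_total 1 α with hα | hα
  · have hfactor : EqOn (fun t => (max s t ^ (α - 1)) ^ p * t ^ (p - 1))
        (fun t => shiftedPow α s t ^ p / t) (Ioi 0) := fun t (ht : 0 < t) => by
      simp only [shiftedPow]
      rw [Real.mul_rpow (by positivity) ht.le, Real.rpow_sub_one ht.ne', mul_div_assoc]
    refine MonotoneOn.congr (fun t (ht : 0 < t) t' (ht' : 0 < t') htt' => ?_) hfactor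
    have : 0 ≤ α - 1 := by linarith
    have : 0 ≤ p - 1 := by linarith
    gcongr
  · have hfactor : EqOn (fun t => ((t / max s t) ^ (1 - α)) ^ p * t ^ (α * p - 1))
        (fun t => shiftedPow α s t ^ p / t) (Ioi 0) := fun t (ht : 0 < t) => by
      simp only [shiftedPow_eq_div_rpow_mul_rpow ht]
      rw [Real.mul_rpow (by positivity) (by positivity), Real.rpow_sub_one ht.ne',
        Real.rpow_mul ht.le, mul_div_assoc]
    refine MonotoneOn.congr (fun t (ht : 0 < t) t' (ht' : 0 < t') htt' => ?_) hfactor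
    have : 0 ≤ 1 - α := by linarith
    have : 0 ≤ α * p - 1 := by linarith
    have hdiv := div_max_le_div_max hs ht htt'
    gcongr

end RealPowers

section MaxNorm

variable {E : Type*} [SeminormedAddCommGroup E]

lemma max_norm_add_le_two_mul (x y : E) : max ‖x‖ ‖x + y‖ ≤ 2 * max ‖x‖ ‖y‖ := by
  have hxy := norm_add_le x y
  refine max_le ?_ ?_ <;>
    linarith [le_max_left ‖x‖ ‖y‖, le_max_right ‖x‖ ‖y‖, norm_nonneg x]

lemma max_norm_le_two_mul_max_norm_sub (a b : E) : max ‖a‖ ‖b‖ ≤ 2 * max ‖a‖ ‖b - a‖ := by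
  simpa using max_norm_add_le_two_mul a (b - a)

lemma max_norm_sub_le_two_mul_max_norm (a b : E) : max ‖a‖ ‖b - a‖ ≤ 2 * max ‖a‖ ‖b‖ := by
  simpa [neg_add_eq_sub] using max_norm_add_le_two_mul (-a) b

end MaxNorm

section SignedPower

variable {E : Type*} [NormedAddCommGroup E] [NormedSpace ℝ E] {α : ℝ}

/-- The signed power `w^⟨α⟩ = ‖w‖ ^ (α - 1) • w` in an arbitrary real normed space; `pw` is the
Euclidean case. -/
def signedPow (α : ℝ) (w : E) : E := ‖w‖ ^ (α - 1) • w

lemma norm_signedPow (hα : α ≠ 0) (w : E) : ‖signedPow α w‖ = ‖w‖ ^ α := by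
  rw [signedPow, norm_smul, Real.norm_of_nonneg (by positivity),
    rpow_sub_one_mul_self (norm_nonneg w) hα]

lemma signedPow_inv_signedPow (hα : α ≠ 0) (w : E) : signedPow α⁻¹ (signedPow α w) = w := by
  rcases eq_or_ne w 0 with rfl | hw
  · simp [signedPow]
  · have hpos : 0 < ‖w‖ := norm_pos_iff.2 hw
    have hexp : α * (α⁻¹ - 1) + (α - 1) = 0 := by field_simp; ring
    rw [signedPow, norm_signedPow hα, signedPow, smul_smul, ← Real.rpow_mul hpos.le,
      ← Real.rpow_add hpos, hexp, Real.rpow_zero, one_smul]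

lemma norm_signedPow_sub_le_max_norm_rpow (hα : 0 < α) (a b : E) :
    ‖signedPow α b - signedPow α a‖ ≤
      (1 + max 1 α) * (max ‖a‖ ‖b‖ ^ (α - 1) * ‖b - a‖) := by
  wlog hab : ‖a‖ ≤ ‖b‖ generalizing a b
  · rw [norm_sub_rev, max_comm ‖a‖, norm_sub_rev b a]
    exact this b a (le_of_not_ge hab)
  rw [max_eq_right hab]
  calc ‖signedPow α b - signedPow α a‖
      = ‖‖b‖ ^ (α - 1) • (b - a) + (‖b‖ ^ (α - 1) - ‖a‖ ^ (α - 1)) • a‖ := by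
        unfold signedPow; congr 1; module
    _ ≤ ‖b‖ ^ (α - 1) * ‖b - a‖ + |‖b‖ ^ (α - 1) - ‖a‖ ^ (α - 1)| * ‖a‖ := by
        refine (norm_add_le _ _).trans_eq ?_
        rw [norm_smul, norm_smul, Real.norm_of_nonneg (by positivity), Real.norm_eq_abs]
    _ ≤ ‖b‖ ^ (α - 1) * ‖b - a‖ + max 1 α * (‖b‖ ^ (α - 1) * (‖b‖ - ‖a‖)) := by
        gcongr _ + ?_
        exact abs_rpow_sub_one_sub_mul_le hα (norm_nonneg a) hab
    _ ≤ ‖b‖ ^ (α - 1) * ‖b - a‖ + max 1 α * (‖b‖ ^ (α - 1) * ‖b - a‖) := by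
        gcongr
        exact norm_sub_norm_le b a
    _ = (1 + max 1 α) * (‖b‖ ^ (α - 1) * ‖b - a‖) := by ring

lemma max_norm_rpow_mul_le_norm_signedPow_sub (hα : 0 < α) (a b : E) :
    max ‖a‖ ‖b‖ ^ (α - 1) * ‖b - a‖ ≤
      (1 + max 1 α⁻¹) * ‖signedPow α b - signedPow α a‖ := by
  set M := max ‖a‖ ‖b‖ with hM
  rcases (le_max_of_le_left (norm_nonneg a) : 0 ≤ M).eq_or_lt with hM0 | hM0
  · have ha : a = 0 := norm_le_zero_iff.1 (hM0 ▸ le_max_left _ _)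
    have hb : b = 0 := norm_le_zero_iff.1 (hM0 ▸ le_max_right _ _)
    simp [ha, hb]
  have hmax : max ‖signedPow α a‖ ‖signedPow α b‖ = M ^ α := by
    rw [norm_signedPow hα.ne', norm_signedPow hα.ne', hM]
    exact ((Real.monotoneOn_rpow_Ici_of_exponent_nonneg hα.le).map_max
      (norm_nonneg a) (norm_nonneg b)).symm
  have hinv := norm_signedPow_sub_le_max_norm_rpow (inv_pos.2 hα) (signedPow α a) (signedPow α b)
  rw [signedPow_inv_signedPow hα.ne', signedPow_inv_signedPow hα.ne', hmax,
    ← Real.rpow_mul hM0.le] at hinv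
  have hexp : M ^ (α - 1) * M ^ (α * (α⁻¹ - 1)) = 1 := by
    rw [← Real.rpow_add hM0, show α - 1 + α * (α⁻¹ - 1) = 0 by field_simp; ring, Real.rpow_zero]
  calc M ^ (α - 1) * ‖b - a‖
      ≤ M ^ (α - 1) * ((1 + max 1 α⁻¹) *
          (M ^ (α * (α⁻¹ - 1)) * ‖signedPow α b - signedPow α a‖)) := by gcongr
    _ = (M ^ (α - 1) * M ^ (α * (α⁻¹ - 1))) *
          ((1 + max 1 α⁻¹) * ‖signedPow α b - signedPow α a‖) := by ring
    _ = (1 + max 1 α⁻¹) * ‖signedPow α b - signedPow α a‖ := by rw [hexp, one_mul]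

lemma norm_signedPow_sub_le_shiftedPow (hα : 0 < α) (a b : E) :
    ‖signedPow α b - signedPow α a‖ ≤
      2 ^ |α - 1| * (1 + max 1 α) * shiftedPow α ‖a‖ ‖b - a‖ := by
  have hmax : max ‖a‖ ‖b‖ ^ (α - 1) ≤ 2 ^ |α - 1| * max ‖a‖ ‖b - a‖ ^ (α - 1) :=
    rpow_le_rpow_abs_mul_rpow (by positivity) (by positivity) zero_le_two
      (max_norm_le_two_mul_max_norm_sub a b) (max_norm_sub_le_two_mul_max_norm a b)
  calc ‖signedPow α b - signedPow α a‖
      ≤ (1 + max 1 α) * (max ‖a‖ ‖b‖ ^ (α - 1) * ‖b - a‖) :=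
        norm_signedPow_sub_le_max_norm_rpow hα a b
    _ ≤ (1 + max 1 α) * (2 ^ |α - 1| * max ‖a‖ ‖b - a‖ ^ (α - 1) * ‖b - a‖) := by gcongr
    _ = 2 ^ |α - 1| * (1 + max 1 α) * shiftedPow α ‖a‖ ‖b - a‖ := by unfold shiftedPow; ring

lemma norm_signedPow_sub_le_shiftedPow_half (hα : 0 < α) (a b : E) :
    ‖signedPow α b - signedPow α a‖ ≤
      2 * (2 ^ |α - 1|) ^ 2 * (1 + max 1 α) * shiftedPow α ‖a‖ (‖b - a‖ / 2) := by
  have hdouble : shiftedPow α ‖a‖ ‖b - a‖ ≤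
      2 * 2 ^ |α - 1| * shiftedPow α ‖a‖ (‖b - a‖ / 2) := by
    simpa only [mul_div_cancel₀ _ (two_ne_zero' ℝ)] using
      shiftedPow_two_mul_le (α := α) (s := ‖a‖) (div_nonneg (norm_nonneg (b - a)) zero_le_two)
  calc ‖signedPow α b - signedPow α a‖
      ≤ 2 ^ |α - 1| * (1 + max 1 α) * shiftedPow α ‖a‖ ‖b - a‖ :=
        norm_signedPow_sub_le_shiftedPow hα a b
    _ ≤ 2 ^ |α - 1| * (1 + max 1 α) *
          (2 * 2 ^ |α - 1| * shiftedPow α ‖a‖ (‖b - a‖ / 2)) := by gcongr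
    _ = 2 * (2 ^ |α - 1|) ^ 2 * (1 + max 1 α) * shiftedPow α ‖a‖ (‖b - a‖ / 2) := by ring

lemma shiftedPow_le_norm_signedPow_sub (hα : 0 < α) (a b : E) :
    shiftedPow α ‖a‖ ‖b - a‖ ≤
      2 ^ |α - 1| * (1 + max 1 α⁻¹) * ‖signedPow α b - signedPow α a‖ := by
  have hmax : max ‖a‖ ‖b - a‖ ^ (α - 1) ≤ 2 ^ |α - 1| * max ‖a‖ ‖b‖ ^ (α - 1) :=
    rpow_le_rpow_abs_mul_rpow (by positivity) (by positivity) zero_le_two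
      (max_norm_sub_le_two_mul_max_norm a b) (max_norm_le_two_mul_max_norm_sub a b)
  calc shiftedPow α ‖a‖ ‖b - a‖
      ≤ 2 ^ |α - 1| * max ‖a‖ ‖b‖ ^ (α - 1) * ‖b - a‖ := by unfold shiftedPow; gcongr
    _ = 2 ^ |α - 1| * (max ‖a‖ ‖b‖ ^ (α - 1) * ‖b - a‖) := by ring
    _ ≤ 2 ^ |α - 1| * ((1 + max 1 α⁻¹) * ‖signedPow α b - signedPow α a‖) := by
        gcongr 2 ^ |α - 1| * ?_
        exact max_norm_rpow_mul_le_norm_signedPow_sub hα a b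
    _ = 2 ^ |α - 1| * (1 + max 1 α⁻¹) * ‖signedPow α b - signedPow α a‖ := by ring

end SignedPower

section Means

variable {Ω : Type*} [MeasurableSpace Ω] {μ : Measure Ω}
  {E : Type*} [NormedAddCommGroup E] [NormedSpace ℝ E] {p α : ℝ} {u : Ω → E}

lemma le_integral_comp_of_monotoneOn_div [IsProbabilityMeasure μ] {ψ : ℝ → ℝ} {f : Ω → ℝ} {c : ℝ}
    (hψ_zero : ψ 0 = 0) (hψ_nonneg : ∀ t, 0 ≤ t → 0 ≤ ψ t)
    (hψ_mono : MonotoneOn (fun t => ψ t / t) (Ioi 0)) (hf_nonneg : ∀ x, 0 ≤ f x)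
    (hf : Integrable f μ) (hψf : Integrable (fun x => ψ (f x)) μ)
    (hc : 0 ≤ c) (hcf : 2 * c ≤ ∫ x, f x ∂μ) :
    ψ c ≤ ∫ x, ψ (f x) ∂μ := by
  rcases hc.eq_or_lt with rfl | hc
  · rw [hψ_zero]
    exact integral_nonneg fun x => hψ_nonneg _ (hf_nonneg x)
  have hslope : 0 ≤ ψ c / c := div_nonneg (hψ_nonneg c hc.le) hc.le
  have hsupport : ∀ t, 0 ≤ t → ψ c / c * (t - c) ≤ ψ t := fun t ht => by
    rcases le_or_gt t c with htc | htc
    · exact (mul_nonpos_of_nonneg_of_nonpos hslope (by linarith)).trans (hψ_nonneg t ht)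
    · have ht : 0 < t := hc.trans htc
      calc ψ c / c * (t - c) ≤ ψ c / c * t := by gcongr; linarith
        _ ≤ ψ t / t * t := by gcongr ?_ * t; exact hψ_mono hc ht htc.le
        _ = ψ t := div_mul_cancel₀ _ ht.ne'
  calc ψ c = ψ c / c * (2 * c - c) := by field_simp; ring
    _ ≤ ψ c / c * (∫ x, f x ∂μ - c) := by gcongr
    _ = ∫ x, ψ c / c * (f x - c) ∂μ := by
        rw [integral_const_mul, integral_sub hf (integrable_const c), integral_const,
          probReal_univ, one_smul]
    _ ≤ ∫ x, ψ (f x) ∂μ :=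
        integral_mono ((hf.sub (integrable_const c)).const_mul _) hψf
          fun x => hsupport (f x) (hf_nonneg x)

lemma memLp_signedPow {q : ℝ≥0∞} (hα : 0 < α) (hu : MemLp u q μ) :
    MemLp (fun x => signedPow α (u x)) (q / ENNReal.ofReal α) μ := by
  have hmeas : AEStronglyMeasurable (fun x => signedPow α (u x)) μ :=
    (hu.1.norm.aemeasurable.pow_const (α - 1)).aestronglyMeasurable.smul hu.1
  refine (hu.norm_rpow_div (ENNReal.ofReal α)).mono hmeas (.of_forall fun x => ?_)
  rw [norm_signedPow hα.ne', ENNReal.toReal_ofReal hα.le]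
  exact le_abs_self _

lemma integrable_norm_signedPow_sub_rpow [IsFiniteMeasure μ] (hp : 0 < p) (hα : 0 < α)
    (hu : MemLp u (ENNReal.ofReal (α * p)) μ) (a : E) :
    Integrable (fun x => ‖signedPow α (u x) - signedPow α a‖ ^ p) μ := by
  have hV : MemLp (fun x => signedPow α (u x)) (ENNReal.ofReal p) μ := by
    have hexp : ENNReal.ofReal (α * p) / ENNReal.ofReal α = ENNReal.ofReal p := by
      rw [← ENNReal.ofReal_div_of_pos hα, mul_div_cancel_left₀ p hα.ne']
    exact hexp ▸ memLp_signedPow hα hu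
  have hint := (hV.sub (memLp_const (signedPow α a))).integrable_norm_rpow
    (by simpa using hp) ENNReal.ofReal_ne_top
  simpa only [ENNReal.toReal_ofReal hp.le, Pi.sub_apply] using hint

lemma norm_integral_sub_le_integral_norm_sub [CompleteSpace E] [IsProbabilityMeasure μ]
    (hu : Integrable u μ) (a : E) : ‖(∫ x, u x ∂μ) - a‖ ≤ ∫ x, ‖u x - a‖ ∂μ := by
  calc ‖(∫ x, u x ∂μ) - a‖ = ‖∫ x, (u x - a) ∂μ‖ := by
        rw [integral_sub hu (integrable_const a), integral_const, probReal_univ, one_smul]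
    _ ≤ ∫ x, ‖u x - a‖ ∂μ := norm_integral_le_integral_norm _

lemma shiftedPow_rpow_half_norm_integral_sub_le [CompleteSpace E] [IsProbabilityMeasure μ]
    (hp : 1 ≤ p) (hαp : 1 ≤ α * p) (hu : MemLp u (ENNReal.ofReal (α * p)) μ) (a : E) :
    shiftedPow α ‖a‖ (‖(∫ x, u x ∂μ) - a‖ / 2) ^ p ≤
      (2 ^ |α - 1| * (1 + max 1 α⁻¹)) ^ p *
        ∫ x, ‖signedPow α (u x) - signedPow α a‖ ^ p ∂μ := by
  have hp0 : 0 < p := by linarith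
  have hα : 0 < α := pos_of_mul_pos_left (zero_lt_one.trans_le hαp) hp0.le
  set C := 2 ^ |α - 1| * (1 + max 1 α⁻¹)
  have hu_int : Integrable u μ := hu.integrable (by simpa using hαp)
  have hdist : Integrable (fun x => ‖u x - a‖) μ := (hu_int.sub (integrable_const a)).norm
  have hψ_nonneg (t : ℝ) (ht : 0 ≤ t) : 0 ≤ shiftedPow α ‖a‖ t ^ p :=
    Real.rpow_nonneg (shiftedPow_nonneg ht) p
  have hψ_le (x : Ω) : shiftedPow α ‖a‖ ‖u x - a‖ ^ p ≤
      C ^ p * ‖signedPow α (u x) - signedPow α a‖ ^ p := by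
    rw [← Real.mul_rpow (by positivity) (norm_nonneg _)]
    exact Real.rpow_le_rpow (shiftedPow_nonneg (norm_nonneg _))
      (shiftedPow_le_norm_signedPow_sub hα a (u x)) hp0.le
  have hV_int := (integrable_norm_signedPow_sub_rpow hp0 hα hu a).const_mul (C ^ p)
  have hψ_int : Integrable (fun x => shiftedPow α ‖a‖ ‖u x - a‖ ^ p) μ :=
    hV_int.mono' ((measurable_shiftedPow.pow_const p).comp_aemeasurable
      hdist.aemeasurable).aestronglyMeasurable <| .of_forall fun x => by
        rw [Real.norm_of_nonneg (hψ_nonneg _ (norm_nonneg _))]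
        exact hψ_le x
  calc shiftedPow α ‖a‖ (‖(∫ x, u x ∂μ) - a‖ / 2) ^ p
      ≤ ∫ x, shiftedPow α ‖a‖ ‖u x - a‖ ^ p ∂μ :=
        le_integral_comp_of_monotoneOn_div (ψ := fun t => shiftedPow α ‖a‖ t ^ p)
          (by simp only [shiftedPow_zero_right, Real.zero_rpow hp0.ne']) hψ_nonneg
          (monotoneOn_shiftedPow_rpow_div hp hαp (norm_nonneg a)) (fun x => norm_nonneg _) hdist
          hψ_int (by positivity)
          (by linarith [norm_integral_sub_le_integral_norm_sub hu_int a])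
    _ ≤ ∫ x, C ^ p * ‖signedPow α (u x) - signedPow α a‖ ^ p ∂μ :=
        integral_mono hψ_int hV_int hψ_le
    _ = C ^ p * ∫ x, ‖signedPow α (u x) - signedPow α a‖ ^ p ∂μ := integral_const_mul _ _

/-- The constant `c(α, p)`: the losses in comparing `signedPow` with `shiftedPow` from above and
below, and in doubling the argument of `shiftedPow`. -/
def meanPowConst (p α : ℝ) : ℝ :=
  (2 * (2 ^ |α - 1|) ^ 3 * (1 + max 1 α) * (1 + max 1 α⁻¹)) ^ p

lemma meanPowConst_pos : 0 < meanPowConst p α := by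
  unfold meanPowConst
  positivity

lemma norm_signedPow_integral_sub_rpow_le [CompleteSpace E] [IsProbabilityMeasure μ]
    (hp : 1 ≤ p) (hαp : 1 ≤ α * p) (hu : MemLp u (ENNReal.ofReal (α * p)) μ) (a : E) :
    ‖signedPow α (∫ x, u x ∂μ) - signedPow α a‖ ^ p ≤
      meanPowConst p α * ∫ x, ‖signedPow α (u x) - signedPow α a‖ ^ p ∂μ := by
  have hp0 : 0 < p := by linarith
  have hα : 0 < α := pos_of_mul_pos_left (zero_lt_one.trans_le hαp) hp0.le
  set m := ∫ x, u x ∂μ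
  have hψ_nonneg : 0 ≤ shiftedPow α ‖a‖ (‖m - a‖ / 2) := shiftedPow_nonneg (by positivity)
  calc ‖signedPow α m - signedPow α a‖ ^ p
      ≤ (2 * (2 ^ |α - 1|) ^ 2 * (1 + max 1 α) * shiftedPow α ‖a‖ (‖m - a‖ / 2)) ^ p := by
        gcongr
        exact norm_signedPow_sub_le_shiftedPow_half hα a m
    _ = (2 * (2 ^ |α - 1|) ^ 2 * (1 + max 1 α)) ^ p * shiftedPow α ‖a‖ (‖m - a‖ / 2) ^ p :=
        Real.mul_rpow (by positivity) hψ_nonneg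
    _ ≤ (2 * (2 ^ |α - 1|) ^ 2 * (1 + max 1 α)) ^ p *
          ((2 ^ |α - 1| * (1 + max 1 α⁻¹)) ^ p *
            ∫ x, ‖signedPow α (u x) - signedPow α a‖ ^ p ∂μ) := by
        gcongr
        exact shiftedPow_rpow_half_norm_integral_sub_le hp hαp hu a
    _ = meanPowConst p α * ∫ x, ‖signedPow α (u x) - signedPow α a‖ ^ p ∂μ := by
        rw [← mul_assoc, ← Real.mul_rpow (by positivity) (by positivity), meanPowConst]
        ring_nf

theorem mean_pow_bound_general [CompleteSpace E] [IsFiniteMeasure μ] [NeZero μ]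
    (hp : 1 ≤ p) (hα : 1 / p ≤ α) (hu : MemLp u (ENNReal.ofReal (α * p)) μ) (a : E) :
    ‖signedPow α (⨍ x, u x ∂μ) - signedPow α a‖ ^ p ≤
      meanPowConst p α * ⨍ x, ‖signedPow α (u x) - signedPow α a‖ ^ p ∂μ := by
  have hp0 : 0 < p := by linarith
  exact norm_signedPow_integral_sub_rpow_le hp ((div_le_iff₀ hp0).1 hα)
    (hu.smul_measure (ENNReal.inv_ne_top.2 (NeZero.ne (μ univ)))) a

end Means

/-- Let `p ≥ 1` and `α ≥ 1/p`. Then there exists `c = c(α, p)` such that for every bounded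
domain `A ⊂ ℝ^k` of positive measure, every `u ∈ L^{αp}(A; ℝ^N)` and every `a ∈ ℝ^N`:
`|((u)_A)^⟨α⟩ − a^⟨α⟩|^p ≤ c ⨍_A |u^⟨α⟩ − a^⟨α⟩|^p dx`. -/
theorem mean_pow_bound (p α : ℝ) (hp : 1 ≤ p) (hα : 1 / p ≤ α) :
    ∃ c : ℝ, 0 < c ∧ ∀ (k N : ℕ) (A : Set (EuclideanSpace ℝ (Fin k))),
      IsOpen A → IsConnected A → Bornology.IsBounded A → 0 < volume A →
      ∀ (u : EuclideanSpace ℝ (Fin k) → Vec N) (a : Vec N),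
        MemLp u (ENNReal.ofReal (α * p)) (volume.restrict A) →
        ‖pw α (⨍ y in A, u y) - pw α a‖ ^ p
          ≤ c * ⨍ x in A, ‖pw α (u x) - pw α a‖ ^ p := by
  refine ⟨meanPowConst p α, meanPowConst_pos, fun k N A _ _ hbdd hpos u a hu => ?_⟩
  have : IsFiniteMeasure (volume.restrict A) := ⟨by simpa using hbdd.measure_lt_top⟩
  have : NeZero (volume.restrict A) := ⟨by simpa using hpos.ne'⟩
  exact mean_pow_bound_general hp hα hu a
end
end

section
/- Gagliardo–Nirenberg inequality on balls: Let 1 ≤ p, q, r < ∞ and θ ∈ (0,1) be such that −n/p ≤ θ(1 − n/q) − (1 − θ) n/r. Then there exists a constant c = c(n,p) such that for any ball B_ρ(x_o) ⊂ ℝ^n with ρ > 0 and any function u ∈ W^{1,q}(B_ρ(x_o)) with u ∈ L^r(B_ρ(x_o)) one has ⨍_{B_ρ(x_o)} |u|^p/ρ^p dx ≤ c [⨍_{B_ρ(x_o)} (|u|^q/ρ^q + |Du|^q) dx]^{θp/q} · [⨍_{B_ρ(x_o)} |u|^r/ρ^r dx]^{(1−θ)p/r}. -/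
open MeasureTheory Set
open scoped ENNReal

noncomputable section

abbrev Spc (n : ℕ) := EuclideanSpace ℝ (Fin n)

/-- `Du` is the weak (spatial) gradient of `u` on the ball `B_ρ(x₀)`: for every smooth,
compactly supported `ψ` with support in the ball and every coordinate direction `i`,
`∫ u ∂_i ψ = − ∫ (Du)_i ψ`. -/
def IsWeakGradOn {n : ℕ} (x₀ : Spc n) (ρ : ℝ) (u : Spc n → ℝ) (Du : Spc n → Spc n) : Prop :=
  ∀ ψ : Spc n → ℝ, ContDiff ℝ (⊤ : ℕ∞) ψ → HasCompactSupport ψ →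
    tsupport ψ ⊆ Metric.ball x₀ ρ → ∀ i : Fin n,
      ∫ x in Metric.ball x₀ ρ, u x * fderiv ℝ ψ x (EuclideanSpace.single i 1)
        = - ∫ x in Metric.ball x₀ ρ, Du x i * ψ x

/-!
All norms are taken with respect to the uniform probability measure on the ball.

For a `C¹` function, integrating along lines parallel to the coordinate axes and applying the
Loomis–Whitney inequality bounds the `L^{n/(n-1)}` norm by the `W^{1,1}` norm, at least on the set
of points through which all these lines have long segments inside the ball. Finitely many rotated
copies of this set cover the ball, with constants depending on `n` only.

Applying this to `|v| ^ γ` with `γ = 1 + k (1 - 1/q)`, `k ≤ p`, and using Hölder's inequality gives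
a family of weighted inequalities whose constants depend on `n` and `p` but not on `q`. This family
yields the Gagliardo–Nirenberg inequality by interpolation, where surplus powers of `‖v‖_p` are
absorbed. That `‖v‖_p` is a priori finite, as absorption requires, is clear for `C¹` functions;
a weakly differentiable `u` is reached by mollification on slightly smaller balls and Fatou's lemma.
-/

section LebesgueNorms

variable {α E : Type*} [MeasurableSpace α] [NormedAddCommGroup E] {μ : Measure α} {f : α → E}

lemma eLpNorm_restrict_le_sum {ι : Type*} (hf : AEStronglyMeasurable f μ) {p : ℝ≥0∞} (hp : 1 ≤ p)
    {s : Set α} (hs : MeasurableSet s)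
    {t : ι → Set α} (ht : ∀ i, MeasurableSet (t i)) {T : Finset ι} (hst : s ⊆ ⋃ i ∈ T, t i) :
    eLpNorm f p (μ.restrict s) ≤ ∑ i ∈ T, eLpNorm f p (μ.restrict (t i)) := by
  have pointwise : ∀ x, ‖s.indicator f x‖ ≤ ‖(∑ i ∈ T, fun x => ‖(t i).indicator f x‖) x‖ := by
    intro x
    rw [Finset.sum_apply, Real.norm_of_nonneg (Finset.sum_nonneg fun _ _ => norm_nonneg _),
      norm_indicator_eq_indicator_norm]
    refine indicator_apply_le' (fun hx => ?_) fun _ => Finset.sum_nonneg fun _ _ => norm_nonneg _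
    obtain ⟨i, hi, hxi⟩ := mem_iUnion₂.1 (hst hx)
    calc ‖f x‖ = ‖(t i).indicator f x‖ := by rw [indicator_of_mem hxi]
      _ ≤ _ := Finset.single_le_sum (f := fun i => ‖(t i).indicator f x‖)
          (fun _ _ => norm_nonneg _) hi
  calc eLpNorm f p (μ.restrict s) = eLpNorm (s.indicator f) p μ :=
        (eLpNorm_indicator_eq_eLpNorm_restrict hs).symm
    _ ≤ eLpNorm (∑ i ∈ T, fun x => ‖(t i).indicator f x‖) p μ := eLpNorm_mono pointwise
    _ ≤ ∑ i ∈ T, eLpNorm (fun x => ‖(t i).indicator f x‖) p μ :=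
        eLpNorm_sum_le (fun i _ => (hf.indicator (ht i)).norm) hp
    _ = _ := Finset.sum_congr rfl fun i _ => by
        rw [eLpNorm_norm, eLpNorm_indicator_eq_eLpNorm_restrict (ht i)]

lemma lintegral_enorm_rpow_eq {p : ℝ} (hp : 0 < p) (f : α → E) :
    ∫⁻ x, ‖f x‖ₑ ^ p ∂μ = eLpNorm f (ENNReal.ofReal p) μ ^ p := by
  rw [eLpNorm_eq_lintegral_rpow_enorm_toReal (by simpa using hp) ENNReal.ofReal_ne_top,
    ENNReal.toReal_ofReal hp.le, ← ENNReal.rpow_mul, one_div_mul_cancel hp.ne', ENNReal.rpow_one]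

lemma integral_norm_rpow_eq {p : ℝ} (hp : 0 < p) (hf : MemLp f (ENNReal.ofReal p) μ) :
    ∫ x, ‖f x‖ ^ p ∂μ = (eLpNorm f (ENNReal.ofReal p) μ).toReal ^ p := by
  have h0 : 0 ≤ ∫ x, ‖f x‖ ^ p ∂μ := integral_nonneg fun x => by positivity
  rw [hf.eLpNorm_eq_integral_rpow_norm (by simpa using hp) ENNReal.ofReal_ne_top,
    ENNReal.toReal_ofReal hp.le, ENNReal.toReal_ofReal (by positivity), ← Real.rpow_mul h0,
    inv_mul_cancel₀ hp.ne', Real.rpow_one]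

lemma integrable_norm_rpow_of_memLp {p : ℝ} (hp : 0 < p) (hf : MemLp f (ENNReal.ofReal p) μ) :
    Integrable (fun x => ‖f x‖ ^ p) μ := by
  have h := hf.integrable_norm_rpow (by simpa using hp) ENNReal.ofReal_ne_top
  rwa [ENNReal.toReal_ofReal hp.le] at h

lemma lintegral_enorm_rpow_mul_enorm_le {E' : Type*} [NormedAddCommGroup E'] {g : α → E'}
    (hf : AEStronglyMeasurable f μ) (hg : AEStronglyMeasurable g μ) {k q : ℝ} (hk : 0 < k)
    (hq : 1 ≤ q) :
    ∫⁻ x, ‖f x‖ₑ ^ (k * (1 - 1 / q)) * ‖g x‖ₑ ∂μ ≤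
      eLpNorm f (ENNReal.ofReal k) μ ^ (k * (1 - 1 / q)) * eLpNorm g (ENNReal.ofReal q) μ := by
  have hq0 : 0 < q := by linarith
  have holder := ENNReal.lintegral_mul_norm_pow_le (μ := μ) (hf.enorm.pow_const k)
    (hg.enorm.pow_const q) (p := 1 - 1 / q) (q := 1 / q)
    (by rw [sub_nonneg, div_le_one hq0]; exact hq) (by positivity) (by ring)
  simpa only [lintegral_enorm_rpow_eq hk, lintegral_enorm_rpow_eq hq0, ← ENNReal.rpow_mul,
    mul_one_div_cancel hq0.ne', ENNReal.rpow_one] using holder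

lemma lintegral_mul_rpow_le_of_lintegral_eq_one {κ F : α → ℝ≥0∞} (hκ : AEMeasurable κ μ)
    (hF : AEMeasurable F μ) (hκ1 : ∫⁻ y, κ y ∂μ = 1) {q : ℝ} (hq : 1 ≤ q) :
    (∫⁻ y, κ y * F y ∂μ) ^ q ≤ ∫⁻ y, κ y * F y ^ q ∂μ := by
  have hq0 : 0 < q := by linarith
  have hq1 : 0 ≤ 1 - 1 / q := by rw [sub_nonneg, div_le_one hq0]; exact hq
  have holder := ENNReal.lintegral_mul_norm_pow_le hκ (hκ.mul (hF.pow_const q)) hq1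
    (by positivity : 0 ≤ 1 / q) (by ring)
  rw [hκ1, ENNReal.one_rpow, one_mul, one_div, ENNReal.le_rpow_inv_iff hq0, ← one_div] at holder
  have hpoint (y : α) : κ y ^ (1 - 1 / q) * (κ y * F y ^ q) ^ (1 / q) = κ y * F y := by
    rw [ENNReal.mul_rpow_of_nonneg _ _ (by positivity), ← ENNReal.rpow_mul,
      mul_one_div_cancel hq0.ne', ENNReal.rpow_one, ← mul_assoc,
      ← ENNReal.rpow_add_of_nonneg _ _ hq1 (by positivity), sub_add_cancel, ENNReal.rpow_one]
  simpa only [Pi.mul_apply, hpoint] using holder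

lemma inv_ofReal_one_div {p : ℝ} (hp : 0 < p) :
    (ENNReal.ofReal (1 / p))⁻¹ = ENNReal.ofReal p := by
  rw [one_div, ENNReal.ofReal_inv_of_pos hp, inv_inv]

lemma inv_ofReal_mul_ofReal (b : ℝ) {t : ℝ} (ht : 0 < t) :
    (ENNReal.ofReal b)⁻¹ * ENNReal.ofReal t = (ENNReal.ofReal (b / t))⁻¹ := by
  rw [ENNReal.ofReal_div_of_pos ht, ENNReal.inv_div (by simp) (by simp [ht]), mul_comm,
    ← div_eq_mul_inv]

lemma eLpNorm_inv_ofReal_anti [IsProbabilityMeasure μ] (hf : AEStronglyMeasurable f μ) :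
    Antitone fun b : ℝ => eLpNorm f (ENNReal.ofReal b)⁻¹ μ := fun _ _ h =>
  eLpNorm_le_eLpNorm_of_exponent_le (ENNReal.inv_le_inv.2 (ENNReal.ofReal_le_ofReal h)) hf

/-- Lebesgue exponents are parametrised by their reciprocals, which makes interpolation affine and
allows the exponent `∞`. -/
lemma eLpNorm_le_interpolation (hf : AEStronglyMeasurable f μ) {b₁ b₂ θ : ℝ} (hb₁ : 0 ≤ b₁)
    (hb₂ : 0 ≤ b₂) (hθ : θ ∈ Icc (0 : ℝ) 1) :
    eLpNorm f (ENNReal.ofReal (θ * b₁ + (1 - θ) * b₂))⁻¹ μ ≤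
      eLpNorm f (ENNReal.ofReal b₁)⁻¹ μ ^ θ * eLpNorm f (ENNReal.ofReal b₂)⁻¹ μ ^ (1 - θ) := by
  rcases hθ.1.eq_or_lt with rfl | hθ0
  · simp
  rcases hθ.2.eq_or_lt with rfl | hθ1
  · simp
  rw [← sub_pos] at hθ1
  have norm_rpow : ∀ b t : ℝ, 0 < t →
      eLpNorm (fun x => ‖f x‖ ^ t) (ENNReal.ofReal (t * b))⁻¹ μ =
        eLpNorm f (ENNReal.ofReal b)⁻¹ μ ^ t := fun b t ht => by
    rw [eLpNorm_norm_rpow f ht, inv_ofReal_mul_ofReal _ ht, mul_div_cancel_left₀ _ ht.ne']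
  have measurable_rpow : ∀ t : ℝ, 0 ≤ t → AEStronglyMeasurable (fun x => ‖f x‖ ^ t) μ :=
    fun t ht => (Real.continuous_rpow_const ht).comp_aestronglyMeasurable hf.norm
  have triple : ENNReal.HolderTriple (ENNReal.ofReal (θ * b₁))⁻¹ (ENNReal.ofReal ((1 - θ) * b₂))⁻¹
      (ENNReal.ofReal (θ * b₁ + (1 - θ) * b₂))⁻¹ :=
    ⟨by rw [inv_inv, inv_inv, inv_inv, ENNReal.ofReal_add (by positivity) (by positivity)]⟩
  have holder := eLpNorm_smul_le_mul_eLpNorm (measurable_rpow (1 - θ) hθ1.le)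
    (measurable_rpow θ hθ0.le) (hpqr := triple)
  rw [norm_rpow _ _ hθ0, norm_rpow _ _ hθ1] at holder
  refine le_trans (le_of_eq ?_) holder
  rw [← eLpNorm_norm]
  congr 1
  funext x
  rw [Pi.smul_apply', smul_eq_mul, ← Real.rpow_add_of_nonneg (norm_nonneg _) hθ0.le hθ1.le,
    add_sub_cancel, Real.rpow_one]

end LebesgueNorms

section SobolevInterpolation

lemma rpow_le_of_rpow_le_mul_rpow_sub {x y : ℝ≥0∞} (hx : x ≠ ∞) {s γ : ℝ} (hs : 0 < s)
    (hsγ : s ≤ γ) (h : x ^ γ ≤ y * x ^ (γ - s)) : x ^ s ≤ y := by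
  rcases eq_or_ne x 0 with rfl | hx0
  · simp [hs]
  rw [← ENNReal.mul_le_mul_iff_left (c := x ^ (γ - s))
    (by simp [ENNReal.rpow_eq_zero_iff, hx0, hx])
    (ENNReal.rpow_ne_top_of_nonneg (sub_nonneg.2 hsγ) hx), ← ENNReal.rpow_add _ _ hx0 hx,
    add_sub_cancel]
  exact h

/-- Since `z ≤ x`, the hypothesis first yields `z ≤ T`; surplus powers of `z` may then be traded
for powers of `T`. -/
lemma le_rpow_mul_rpow_of_le_mul_rpow_one_sub {x z T : ℝ≥0∞} (hx : x ≠ ∞) (hzx : z ≤ x) {α β θ : ℝ}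
    (hα : 0 < α) (hβ : 0 ≤ β) (hαβ : α + β ≤ 1) (hθ : α ≤ θ * (α + β)) (hθ1 : θ ≤ 1)
    (h : x ≤ T ^ α * z ^ β * x ^ (1 - (α + β))) : x ≤ T ^ θ * z ^ (1 - θ) := by
  have hs : 0 < α + β := by linarith
  have hxs : x ^ (α + β) ≤ T ^ α * z ^ β :=
    rpow_le_of_rpow_le_mul_rpow_sub hx hs hαβ (by rwa [ENNReal.rpow_one])
  have hzT : z ≤ T := by
    refine hzx.trans ((ENNReal.rpow_le_rpow_iff hα).1 (rpow_le_of_rpow_le_mul_rpow_sub hx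
      hα (le_add_of_nonneg_right hβ) (hxs.trans ?_)))
    rw [add_sub_cancel_left]
    gcongr
  rw [← ENNReal.rpow_le_rpow_iff hs, ENNReal.mul_rpow_of_nonneg _ _ hs.le, ← ENNReal.rpow_mul,
    ← ENNReal.rpow_mul]
  have : 0 ≤ 1 - θ := by linarith
  have hδ : 0 ≤ θ * (α + β) - α := by linarith
  calc x ^ (α + β) ≤ T ^ α * z ^ β := hxs
    _ = T ^ α * (z ^ (θ * (α + β) - α) * z ^ ((1 - θ) * (α + β))) := by
        rw [← ENNReal.rpow_add_of_nonneg _ _ hδ (by positivity)]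
        congr 2
        ring
    _ ≤ T ^ α * (T ^ (θ * (α + β) - α) * z ^ ((1 - θ) * (α + β))) := by gcongr
    _ = T ^ (θ * (α + β)) * z ^ ((1 - θ) * (α + β)) := by
        rw [← mul_assoc, ← ENNReal.rpow_add_of_nonneg _ _ hα.le hδ, add_sub_cancel]

variable {α E : Type*} [MeasurableSpace α] [NormedAddCommGroup E] {ν : Measure α}
  [IsProbabilityMeasure ν] {f : α → E} {d p q r θ : ℝ} {T : ℝ≥0∞}

/-- The weighted Sobolev inequality obtained by applying `W^{1,1} ⊂ L^{1/(1-d)}` to `|f| ^ γ` with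
`γ = 1 + k (1 - 1 / q)` and Hölder's inequality, for all weights `k` up to `p`; here `d` is the
reciprocal of the dimension and `T` bounds the `W^{1,q}` norm of `f`. -/
def WeightedSobolev (f : α → E) (ν : Measure α) (d p q : ℝ) (T : ℝ≥0∞) : Prop :=
  ∀ k, 0 < k → k ≤ p →
    eLpNorm f (ENNReal.ofReal ((1 - d) / (1 + k * (1 - 1 / q))))⁻¹ ν ^ (1 + k * (1 - 1 / q)) ≤
      T * eLpNorm f (ENNReal.ofReal k) ν ^ (k * (1 - 1 / q))

lemma WeightedSobolev.eLpNorm_le (hS : WeightedSobolev f ν d p q T)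
    (hf : MemLp f (ENNReal.ofReal p) ν) (hp : 0 < p) (hq : 1 ≤ q) {κ : ℝ} (hκp : 1 / p ≤ κ)
    (hκq : 1 / q - d ≤ κ) : eLpNorm f (ENNReal.ofReal κ)⁻¹ ν ≤ T := by
  have hκ : 0 < κ := (by positivity : 0 < 1 / p).trans_le hκp
  have hq1 : 0 ≤ 1 - 1 / q := by rw [sub_nonneg, div_le_one (by linarith)]; exact hq
  set σ := 1 / κ * (1 - 1 / q)
  have hσ : 0 ≤ σ := by positivity
  have hκσ : κ * σ = 1 - 1 / q := by simp only [σ]; field_simp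
  have hanti := eLpNorm_inv_ofReal_anti hf.1
  have hfin : eLpNorm f (ENNReal.ofReal κ)⁻¹ ν ≠ ∞ :=
    ((hanti hκp).trans_lt (by simpa only [inv_ofReal_one_div hp] using hf.2)).ne
  rw [← ENNReal.rpow_one (eLpNorm f _ ν)]
  refine rpow_le_of_rpow_le_mul_rpow_sub hfin one_pos (le_add_of_nonneg_right hσ) ?_
  calc eLpNorm f (ENNReal.ofReal κ)⁻¹ ν ^ (1 + σ)
      ≤ eLpNorm f (ENNReal.ofReal ((1 - d) / (1 + σ)))⁻¹ ν ^ (1 + σ) := by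
        refine ENNReal.rpow_le_rpow (hanti ?_) (by positivity)
        rw [div_le_iff₀ (by positivity)]
        linarith
    _ ≤ T * eLpNorm f (ENNReal.ofReal (1 / κ)) ν ^ σ :=
        hS (1 / κ) (by positivity) (one_div_le hκ hp |>.2 hκp)
    _ = T * eLpNorm f (ENNReal.ofReal κ)⁻¹ ν ^ (1 + σ - 1) := by
        rw [← inv_ofReal_one_div (by positivity : 0 < 1 / κ), one_div_one_div, add_sub_cancel_left]

lemma WeightedSobolev.eLpNorm_le_of_mul_le (hS : WeightedSobolev f ν d p q T)
    (hf : MemLp f (ENNReal.ofReal p) ν) (hp : 0 < p) (hq : 1 ≤ q) (hr : 0 < r)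
    (hθ : θ ∈ Icc (0 : ℝ) 1) (hexp : θ * (1 / q - d) + (1 - θ) * (1 / r) ≤ 1 / p)
    (hpr : (1 - θ) * (1 / r) ≤ (1 - θ) * (1 / p)) :
    eLpNorm f (ENNReal.ofReal p) ν ≤ T ^ θ * eLpNorm f (ENNReal.ofReal r) ν ^ (1 - θ) := by
  set κ := max (1 / p) (1 / q - d)
  have hκp : 1 / p ≤ κ := le_max_left _ _
  have hκ : 0 ≤ κ := (by positivity : 0 ≤ 1 / p).trans hκp
  have hκr : θ * κ + (1 - θ) * (1 / r) ≤ 1 / p := by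
    rw [mul_max_of_nonneg _ _ hθ.1, max_add]
    exact max_le (by linarith) hexp
  calc eLpNorm f (ENNReal.ofReal p) ν = eLpNorm f (ENNReal.ofReal (1 / p))⁻¹ ν := by
        rw [inv_ofReal_one_div hp]
    _ ≤ eLpNorm f (ENNReal.ofReal (θ * κ + (1 - θ) * (1 / r)))⁻¹ ν :=
        eLpNorm_inv_ofReal_anti hf.1 hκr
    _ ≤ eLpNorm f (ENNReal.ofReal κ)⁻¹ ν ^ θ *
          eLpNorm f (ENNReal.ofReal (1 / r))⁻¹ ν ^ (1 - θ) :=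
        eLpNorm_le_interpolation hf.1 hκ (by positivity) hθ
    _ ≤ _ := by
        rw [inv_ofReal_one_div hr]
        gcongr
        · exact hθ.1
        · exact hS.eLpNorm_le hf hp hq hκp (le_max_right _ _)

lemma eLpNorm_le_of_rpow_le {a b c γ : ℝ} (hf : MemLp f (ENNReal.ofReal a)⁻¹ ν) (hb : 0 ≤ b)
    (hba : b < a) (hac : a < c) (hγ : 1 ≤ γ) (hθ1 : θ ≤ 1)
    (hgap : (1 - θ) * (c - a) ≤ θ * γ * (a - b))
    (hT : eLpNorm f (ENNReal.ofReal b)⁻¹ ν ^ γ ≤ T * eLpNorm f (ENNReal.ofReal a)⁻¹ ν ^ (γ - 1)) :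
    eLpNorm f (ENNReal.ofReal a)⁻¹ ν ≤ T ^ θ * eLpNorm f (ENNReal.ofReal c)⁻¹ ν ^ (1 - θ) := by
  set N : ℝ → ℝ≥0∞ := fun b => eLpNorm f (ENNReal.ofReal b)⁻¹ ν
  have hγ0 : 0 < γ := by linarith
  have hcb : 0 < c - b := by linarith
  set l := (c - a) / (c - b)
  have hl0 : 0 < l := div_pos (by linarith) hcb
  have hl1 : 0 ≤ 1 - l := by rw [sub_nonneg, div_le_one hcb]; linarith
  have hlcb : l * (c - b) = c - a := div_mul_cancel₀ _ hcb.ne'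
  have hlθ : (1 - θ) * l ≤ θ * γ * (1 - l) := by
    have h1l : 1 - l = (a - b) / (c - b) := by rw [one_sub_div hcb.ne']; ring
    rw [h1l, ← mul_div_assoc, ← mul_div_assoc]
    gcongr
  have hlγ : l / γ * γ = l := div_mul_cancel₀ _ hγ0.ne'
  have hlγl : l / γ ≤ l := div_le_self hl0.le hγ
  refine le_rpow_mul_rpow_of_le_mul_rpow_one_sub hf.2.ne (eLpNorm_inv_ofReal_anti hf.1 hac.le)
    (α := l / γ) (by positivity) hl1 (by linarith) ?_ hθ1 ?_
  · rw [← mul_le_mul_iff_left₀ hγ0]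
    linear_combination hlθ + (1 - θ) * hlγ
  calc N a = N (l * b + (1 - l) * c) := by congr 1; linarith
    _ ≤ N b ^ l * N c ^ (1 - l) :=
        eLpNorm_le_interpolation hf.1 hb (by linarith) ⟨hl0.le, by linarith⟩
    _ = (N b ^ γ) ^ (l / γ) * N c ^ (1 - l) := by rw [← ENNReal.rpow_mul, mul_div_cancel₀ _ hγ0.ne']
    _ ≤ (T * N a ^ (γ - 1)) ^ (l / γ) * N c ^ (1 - l) := by gcongr
    _ = T ^ (l / γ) * N c ^ (1 - l) * N a ^ (1 - (l / γ + (1 - l))) := by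
        rw [ENNReal.mul_rpow_of_nonneg _ _ (by positivity), ← ENNReal.rpow_mul, mul_right_comm]
        congr 2
        linear_combination hlγ

lemma WeightedSobolev.eLpNorm_le_of_lt (hS : WeightedSobolev f ν d p q T)
    (hf : MemLp f (ENNReal.ofReal p) ν) (hd : d ≤ 1) (hp : 0 < p) (hq : 1 ≤ q)
    (hθ : θ ∈ Ico (0 : ℝ) 1) (hexp : θ * (1 / q - d) + (1 - θ) * (1 / r) ≤ 1 / p)
    (hpr : 1 / p < 1 / r) :
    eLpNorm f (ENNReal.ofReal p) ν ≤ T ^ θ * eLpNorm f (ENNReal.ofReal r) ν ^ (1 - θ) := by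
  have hr : 0 < r := one_div_pos.1 ((one_div_pos.2 hp).trans hpr)
  have hq1 : 0 ≤ 1 - 1 / q := by rw [sub_nonneg, div_le_one (by linarith)]; exact hq
  have hweighted := hS p hp le_rfl
  rw [← inv_ofReal_one_div hp] at hf hweighted ⊢
  rw [← inv_ofReal_one_div hr]
  set γ := 1 + p * (1 - 1 / q)
  have hγ1 : 1 ≤ γ := le_add_of_nonneg_right (by positivity)
  have hγ : 0 < γ := by linarith
  have hγgap : γ * (1 / p - (1 - d) / γ) = 1 / p - (1 / q - d) := by
    have hγp : γ * (1 / p) = 1 / p + (1 - 1 / q) := by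
      rw [add_mul, one_mul, mul_right_comm, mul_one_div_cancel hp.ne', one_mul]
    rw [mul_sub, mul_div_cancel₀ _ hγ.ne', hγp]
    ring
  have hgap : (1 - θ) * (1 / r - 1 / p) ≤ θ * γ * (1 / p - (1 - d) / γ) := by
    rw [mul_assoc, hγgap]; linarith
  have hba : (1 - d) / γ < 1 / p := by
    have hpos : 0 < θ * γ * (1 / p - (1 - d) / γ) :=
      (mul_pos (by linarith [hθ.2]) (by linarith)).trans_le hgap
    linarith [pos_of_mul_pos_right hpos (mul_nonneg hθ.1 hγ.le)]
  refine eLpNorm_le_of_rpow_le hf (div_nonneg (by linarith) hγ.le) hba hpr hγ1 hθ.2.le hgap ?_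
  rwa [add_sub_cancel_left]

/-- The two cases differ in kind: for `p ≤ r` one interpolates between `L^r` and the bound by `T`,
whereas for `r < p` the factor `L^p` in the weighted inequality with `k = p` is absorbed. -/
lemma WeightedSobolev.eLpNorm_le_rpow_mul_rpow (hS : WeightedSobolev f ν d p q T)
    (hf : MemLp f (ENNReal.ofReal p) ν) (hd : d ≤ 1) (hp : 0 < p) (hq : 1 ≤ q) (hr : 0 < r)
    (hθ : θ ∈ Icc (0 : ℝ) 1) (hexp : θ * (1 / q - d) + (1 - θ) * (1 / r) ≤ 1 / p) :
    eLpNorm f (ENNReal.ofReal p) ν ≤ T ^ θ * eLpNorm f (ENNReal.ofReal r) ν ^ (1 - θ) := by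
  by_cases hpr : (1 - θ) * (1 / r) ≤ (1 - θ) * (1 / p)
  · exact hS.eLpNorm_le_of_mul_le hf hp hq hr hθ hexp hpr
  · rw [not_le] at hpr
    have hθ1 : 0 ≤ 1 - θ := by linarith [hθ.2]
    have hθlt : θ < 1 := hθ.2.lt_of_ne fun h => by simp [h] at hpr
    exact hS.eLpNorm_le_of_lt hf hd hp hq ⟨hθ.1, hθlt⟩ hexp (lt_of_mul_lt_mul_left hpr hθ1)

end SobolevInterpolation

section Gagliardo

variable {n : ℕ} {F : Type*} [NormedAddCommGroup F]

/-- The Sobolev conjugate `n / (n - 1)` of `1` in dimension `n`. It is written as the inverse of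
`1 - 1 / n` so that it equals `∞` for `n = 1`. -/
def sobolevConj (n : ℕ) : ℝ≥0∞ := (ENNReal.ofReal (1 - 1 / n))⁻¹

lemma one_le_sobolevConj : 1 ≤ sobolevConj n := by
  rw [sobolevConj, ENNReal.one_le_inv]
  exact ENNReal.ofReal_le_one.2 (sub_le_self _ (by positivity))

lemma enorm_le_lintegral_Icc [NormedSpace ℝ F] {g : ℝ → F} (hg : ContDiff ℝ 1 g) {a b c : ℝ}
    (hc : c ∈ Icc a b) :
    ENNReal.ofReal (b - a) * ‖g c‖ₑ ≤
      ∫⁻ t in Icc a b, (‖g t‖ₑ + ENNReal.ofReal (b - a) * ‖deriv g t‖ₑ) := by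
  have pointwise : ∀ t ∈ Icc a b, ‖g c‖ₑ ≤ ‖g t‖ₑ + ∫⁻ s in Icc a b, ‖deriv g s‖ₑ := by
    intro t ht
    have hsub : ‖g c - g t‖ₑ ≤ ∫⁻ s in Icc a b, ‖deriv g s‖ₑ := by
      rcases le_total t c with htc | htc
      · exact (enorm_sub_le_lintegral_deriv_of_contDiffOn_Icc hg.contDiffOn htc).trans
          (lintegral_mono_set (Icc_subset_Icc ht.1 hc.2))
      · rw [enorm_sub_rev]
        exact (enorm_sub_le_lintegral_deriv_of_contDiffOn_Icc hg.contDiffOn htc).trans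
          (lintegral_mono_set (Icc_subset_Icc hc.1 ht.2))
    calc ‖g c‖ₑ = ‖g t + (g c - g t)‖ₑ := by rw [add_sub_cancel]
      _ ≤ ‖g t‖ₑ + ‖g c - g t‖ₑ := enorm_add_le _ _
      _ ≤ _ := by gcongr
  have hgm : Measurable fun t => ‖g t‖ₑ := hg.continuous.enorm.measurable
  calc ENNReal.ofReal (b - a) * ‖g c‖ₑ = ∫⁻ _ in Icc a b, ‖g c‖ₑ := by simp [mul_comm]
    _ ≤ ∫⁻ t in Icc a b, (‖g t‖ₑ + ∫⁻ s in Icc a b, ‖deriv g s‖ₑ) :=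
        setLIntegral_mono' measurableSet_Icc pointwise
    _ = _ := by
        rw [lintegral_add_left hgm, lintegral_add_left hgm,
          lintegral_const_mul' _ _ ENNReal.ofReal_ne_top]
        simp [mul_comm]

lemma eLpNorm_top_le_lintegral_of_forall_le {f : Spc 1 → F} {g : Spc 1 → ℝ≥0∞}
    (hg : Measurable g) (hfg : ∀ (x : Fin 1 → ℝ) (i : Fin 1),
      ‖f (WithLp.toLp 2 x)‖ₑ ≤ ∫⁻ s, g (WithLp.toLp 2 (Function.update x i s))) :
    eLpNorm f ∞ volume ≤ ∫⁻ y, g y := by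
  have toLp_preserving := PiLp.volume_preserving_toLp (Fin 1)
  have lintegral_line : ∫⁻ s : ℝ, g (WithLp.toLp 2 fun _ => s) = ∫⁻ y, g y :=
    ((volume_preserving_funUnique (Fin 1) ℝ).symm.lintegral_comp
      (hg.comp toLp_preserving.measurable)).trans (toLp_preserving.lintegral_comp hg)
  rw [eLpNorm_exponent_top]
  refine essSup_le_of_ae_le _ (Filter.Eventually.of_forall fun y => ?_)
  refine (hfg (WithLp.ofLp y) 0).trans_eq (Eq.trans ?_ lintegral_line)
  refine lintegral_congr fun s => congrArg (fun x => g (WithLp.toLp 2 x)) (funext fun j => ?_)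
  rw [Subsingleton.elim j 0, Function.update_self]

lemma eLpNorm_le_lintegral_of_forall_le (hn : 1 ≤ n) {f : Spc n → F} {g : Spc n → ℝ≥0∞}
    (hg : Measurable g) (hfg : ∀ (x : Fin n → ℝ) (i : Fin n),
      ‖f (WithLp.toLp 2 x)‖ₑ ≤ ∫⁻ s, g (WithLp.toLp 2 (Function.update x i s))) :
    eLpNorm f (sobolevConj n) volume ≤ ∫⁻ y, g y := by
  rcases hn.eq_or_lt with rfl | hn2
  · simpa [sobolevConj] using eLpNorm_top_le_lintegral_of_forall_le hg hfg
  have hn1 : (0 : ℝ) < n - 1 := by rw [sub_pos]; exact_mod_cast hn2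
  have hn0 : (0 : ℝ) < n := by linarith
  have toLp_preserving := PiLp.volume_preserving_toLp (Fin n)
  have hconj : Real.HolderConjugate (Fintype.card (Fin n)) (n / (n - 1)) := by
    rw [Fintype.card_fin, Real.holderConjugate_iff]
    exact ⟨by linarith, by field_simp; ring⟩
  have hsob : sobolevConj n = ENNReal.ofReal (n / (n - 1)) := by
    rw [sobolevConj, ← ENNReal.ofReal_inv_of_pos (by rw [one_sub_div hn0.ne']; positivity)]
    congr 1
    field_simp
  have hp : (0 : ℝ) < n / (n - 1) := by positivity
  rw [hsob, eLpNorm_eq_lintegral_rpow_enorm_toReal (by simpa using hp) ENNReal.ofReal_ne_top,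
    ENNReal.toReal_ofReal hp.le, one_div, ENNReal.rpow_inv_le_iff hp,
    ← toLp_preserving.lintegral_comp hg,
    ← toLp_preserving.lintegral_comp_emb (MeasurableEquiv.toLp 2 (Fin n → ℝ)).measurableEmbedding]
  refine (lintegral_mono fun x => ?_).trans (lintegral_prod_lintegral_pow_le
    (fun _ : Fin n => (volume : Measure ℝ)) hconj (hg.comp toLp_preserving.measurable))
  calc ‖f (WithLp.toLp 2 x)‖ₑ ^ ((n : ℝ) / (n - 1))
      = ∏ _i : Fin n, ‖f (WithLp.toLp 2 x)‖ₑ ^ ((1 : ℝ) / (n - 1)) := by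
        rw [Finset.prod_const, Finset.card_univ, Fintype.card_fin, ← ENNReal.rpow_natCast,
          ← ENNReal.rpow_mul, one_div_mul_eq_div]
    _ ≤ _ := by
        rw [Fintype.card_fin]
        exact Finset.prod_le_prod' fun i _ => ENNReal.rpow_le_rpow (hfg x i) (by positivity)

lemma norm_toLp_update_sq (x : Fin n → ℝ) (i : Fin n) (s : ℝ) :
    ‖WithLp.toLp 2 (Function.update x i s)‖ ^ 2 = ‖WithLp.toLp 2 x‖ ^ 2 - x i ^ 2 + s ^ 2 := by
  have hsum : ∑ j ∈ Finset.univ.erase i, Function.update x i s j ^ 2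
      = ∑ j ∈ Finset.univ.erase i, x j ^ 2 :=
    Finset.sum_congr rfl fun j hj => by rw [Function.update_of_ne (Finset.ne_of_mem_erase hj)]
  rw [EuclideanSpace.real_norm_sq_eq, EuclideanSpace.real_norm_sq_eq,
    ← Finset.add_sum_erase _ _ (Finset.mem_univ i), ← Finset.add_sum_erase _ _ (Finset.mem_univ i)]
  simp only [hsum, Function.update_self]
  ring

/-- Points of the ball `B_R` through which every line parallel to a coordinate axis contains a
segment of length `δ` inside the ball, provided that `δ ≤ R / 2`. -/
def coordDeep (n : ℕ) (R δ : ℝ) : Set (Spc n) :=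
  {x | ‖x‖ < R ∧ (‖x‖ < R / 2 ∨ ∀ i, δ ≤ |x i|)}

lemma measurableSet_coordDeep {R δ : ℝ} : MeasurableSet (coordDeep n R δ) := by
  have h : MeasurableSet {x : Spc n | ∀ i, δ ≤ |x i|} := by
    rw [ofPred_forall]
    exact MeasurableSet.iInter fun i => measurableSet_le measurable_const (by fun_prop)
  exact (measurableSet_lt measurable_norm measurable_const).inter
    ((measurableSet_lt measurable_norm measurable_const).union h)

lemma exists_Icc_update_mem_ball {R δ : ℝ} (hδ : 0 ≤ δ) (hδR : δ ≤ R / 2) {x : Fin n → ℝ}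
    (hx : WithLp.toLp 2 x ∈ coordDeep n R δ) (i : Fin n) :
    ∃ a b : ℝ, b - a = δ ∧ x i ∈ Icc a b ∧
      ∀ s ∈ Icc a b, WithLp.toLp 2 (Function.update x i s) ∈ Metric.ball (0 : Spc n) R := by
  have hx0 := norm_nonneg (WithLp.toLp 2 x)
  obtain ⟨hxR, hxδ⟩ := hx
  have mem_ball : ∀ s, ‖WithLp.toLp 2 x‖ ^ 2 - x i ^ 2 + s ^ 2 < R ^ 2 →
      WithLp.toLp 2 (Function.update x i s) ∈ Metric.ball (0 : Spc n) R := fun s hs => by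
    rw [mem_ball_zero_iff]
    exact lt_of_pow_lt_pow_left₀ 2 (by linarith) (by rwa [norm_toLp_update_sq])
  rcases le_or_gt δ |x i| with hfar | hnear
  · rcases le_total 0 (x i) with h0 | h0
    · rw [abs_of_nonneg h0] at hfar
      exact ⟨x i - δ, x i, by ring, ⟨by linarith, le_rfl⟩,
        fun s hs => mem_ball s (by nlinarith [hs.1, hs.2])⟩
    · rw [abs_of_nonpos h0] at hfar
      exact ⟨x i, x i + δ, by ring, ⟨le_rfl, by linarith⟩,
        fun s hs => mem_ball s (by nlinarith [hs.1, hs.2])⟩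
  · have hxR2 : ‖WithLp.toLp 2 x‖ < R / 2 := hxδ.resolve_right fun h => not_le.2 hnear (h i)
    rw [abs_lt] at hnear
    rcases le_total 0 (x i) with h0 | h0
    · exact ⟨0, δ, by ring, ⟨h0, hnear.2.le⟩,
        fun s hs => mem_ball s (by nlinarith [hs.1, hs.2, sq_nonneg (x i)])⟩
    · exact ⟨-δ, 0, by ring, ⟨hnear.1.le, h0⟩,
        fun s hs => mem_ball s (by nlinarith [hs.1, hs.2, sq_nonneg (x i)])⟩

variable [NormedSpace ℝ F] {v : Spc n → F}

lemma hasDerivAt_toLp_update (x : Fin n → ℝ) (i : Fin n) (s : ℝ) :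
    HasDerivAt (fun s : ℝ => WithLp.toLp 2 (Function.update x i s))
      (EuclideanSpace.single i (1 : ℝ)) s :=
  (PiLp.hasFDerivAt_toLp 2 _).comp_hasDerivAt s (hasDerivAt_update x i s)

lemma enorm_le_lintegral_update {R δ : ℝ} (hδ : 0 ≤ δ) (hδR : δ ≤ R / 2)
    (hv : ContDiff ℝ 1 v) {x : Fin n → ℝ} (hx : WithLp.toLp 2 x ∈ coordDeep n R δ) (i : Fin n) :
    ENNReal.ofReal δ * ‖v (WithLp.toLp 2 x)‖ₑ ≤ ∫⁻ s, (Metric.ball (0 : Spc n) R).indicator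
      (fun y => ‖v y‖ₑ + ENNReal.ofReal δ * ‖fderiv ℝ v y‖ₑ)
        (WithLp.toLp 2 (Function.update x i s)) := by
  obtain ⟨a, b, rfl, hmem, hball⟩ := exists_Icc_update_mem_ball hδ hδR hx i
  have hline : ContDiff ℝ 1 fun s : ℝ => WithLp.toLp 2 (Function.update x i s) :=
    (PiLp.contDiff_toLp).comp (contDiff_update 1 x i)
  have hone := enorm_le_lintegral_Icc (hv.comp hline) hmem
  simp only [Function.comp_apply, Function.update_eq_self] at hone
  refine hone.trans ?_
  rw [← lintegral_indicator measurableSet_Icc]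
  refine lintegral_mono fun s => indicator_apply_le' (fun hs => ?_) fun _ => zero_le
  rw [indicator_of_mem (hball s hs)]
  gcongr
  rw [((hv.differentiable one_ne_zero _).hasFDerivAt.comp_hasDerivAt s
    (hasDerivAt_toLp_update x i s)).deriv, enorm_le_iff_norm_le]
  simpa using (fderiv ℝ v (WithLp.toLp 2 (Function.update x i s))).le_opNorm
    (EuclideanSpace.single i 1)

lemma measurable_enorm_add_enorm_fderiv (hv : ContDiff ℝ 1 v) (c : ℝ≥0∞) :
    Measurable fun y => ‖v y‖ₑ + c * ‖fderiv ℝ v y‖ₑ :=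
  hv.continuous.enorm.measurable.add
    ((hv.continuous_fderiv one_ne_zero).enorm.measurable.const_mul c)

lemma eLpNorm_restrict_coordDeep_le (hn : 1 ≤ n) {R δ : ℝ} (hδ : 0 ≤ δ) (hδR : δ ≤ R / 2)
    (hv : ContDiff ℝ 1 v) :
    ENNReal.ofReal δ * eLpNorm v (sobolevConj n) (volume.restrict (coordDeep n R δ)) ≤
      ∫⁻ y in Metric.ball (0 : Spc n) R, (‖v y‖ₑ + ENNReal.ofReal δ * ‖fderiv ℝ v y‖ₑ) := by
  rw [← lintegral_indicator measurableSet_ball,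
    ← eLpNorm_indicator_eq_eLpNorm_restrict measurableSet_coordDeep, ← Real.enorm_of_nonneg hδ,
    ← eLpNorm_const_smul, Real.enorm_of_nonneg hδ]
  refine eLpNorm_le_lintegral_of_forall_le hn
    ((measurable_enorm_add_enorm_fderiv hv _).indicator measurableSet_ball) fun x i => ?_
  rw [Pi.smul_apply, enorm_smul, Real.enorm_of_nonneg hδ]
  by_cases hx : WithLp.toLp 2 x ∈ coordDeep n R δ
  · rw [indicator_of_mem hx]
    exact enorm_le_lintegral_update hδ hδR hv hx i
  · simp [hx]

lemma exists_unit_vector_coord_eq (hn : 1 ≤ n) :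
    ∃ w : Spc n, ‖w‖ = 1 ∧ ∃ c > 0, ∀ i, w i = c := by
  have hn0 : (0 : ℝ) < n := by exact_mod_cast hn
  refine ⟨WithLp.toLp 2 fun _ => (√n)⁻¹, ?_, (√n)⁻¹, by positivity, fun _ => rfl⟩
  rw [EuclideanSpace.norm_eq, Real.sqrt_eq_one]
  simp [hn0.ne']

/-- Near each unit vector `x` one may use the reflection taking `x` to the diagonal direction; the
sphere is compact. -/
lemma exists_finset_isometry_coord (hn : 1 ≤ n) :
    ∃ (c : ℝ) (T : Finset (Spc n ≃ₗᵢ[ℝ] Spc n)), 0 < c ∧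
      ∀ x : Spc n, ∃ O ∈ T, ∀ i, c * ‖x‖ ≤ |O x i| := by
  obtain ⟨w, hw, c, hc, hwc⟩ := exists_unit_vector_coord_eq hn
  obtain ⟨T, hT⟩ := (isCompact_sphere (0 : Spc n) 1).elim_finite_subcover
    (fun O : Spc n ≃ₗᵢ[ℝ] Spc n => {x | ∀ i, c / 2 < |O x i|})
    (fun O => by
      simp only [ofPred_forall]
      exact isOpen_iInter_of_finite fun i => isOpen_lt (by fun_prop) (by fun_prop))
    (fun x hx => by
      rw [mem_sphere_zero_iff_norm] at hx
      refine mem_iUnion.2 ⟨(ℝ ∙ (x - w))ᗮ.reflection, fun i => ?_⟩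
      rw [Submodule.reflection_sub (hx.trans hw.symm), hwc, abs_of_pos hc]
      exact half_lt_self hc)
  have on_sphere : ∀ y : Spc n, ‖y‖ = 1 → ∃ O ∈ T, ∀ i, c / 2 < |O y i| := fun y hy => by
    simpa using hT (mem_sphere_zero_iff_norm.2 hy)
  refine ⟨c / 2, T, half_pos hc, fun x => ?_⟩
  rcases eq_or_ne x 0 with rfl | hx
  · obtain ⟨O, hO, -⟩ := on_sphere w hw
    exact ⟨O, hO, fun i => by simp⟩
  · have hx0 : 0 < ‖x‖ := norm_pos_iff.2 hx
    obtain ⟨O, hO, hOx⟩ := on_sphere (‖x‖⁻¹ • x) (norm_smul_inv_norm hx)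
    refine ⟨O, hO, fun i => ?_⟩
    have hi := (hOx i).le
    rwa [map_smul, PiLp.smul_apply, smul_eq_mul, abs_mul, abs_inv, abs_norm, inv_mul_eq_div,
      le_div_iff₀ hx0] at hi

lemma eLpNorm_restrict_preimage_coordDeep_le (hn : 1 ≤ n) {R δ : ℝ} (hδ : 0 ≤ δ)
    (hδR : δ ≤ R / 2) (hv : ContDiff ℝ 1 v) (x₀ : Spc n) (O : Spc n ≃ₗᵢ[ℝ] Spc n) :
    ENNReal.ofReal δ * eLpNorm v (sobolevConj n)
        (volume.restrict ((fun x => O (x - x₀)) ⁻¹' coordDeep n R δ)) ≤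
      ∫⁻ y in Metric.ball x₀ R, (‖v y‖ₑ + ENNReal.ofReal δ * ‖fderiv ℝ v y‖ₑ) := by
  set Φ : Spc n → Spc n := fun x => O (x - x₀)
  set Ψ : Spc n → Spc n := fun y => O.symm y + x₀
  have hΨΦ : ∀ x, Ψ (Φ x) = x := fun x => by simp [Φ, Ψ]
  have hΦ : MeasurePreserving Φ volume volume :=
    O.measurePreserving.comp (measurePreserving_sub_right volume x₀)
  have hΦe : MeasurableEmbedding Φ :=
    O.toMeasurableEquiv.measurableEmbedding.comp (measurableEmbedding_subRight x₀)
  have hvΨ : ContDiff ℝ 1 (v ∘ Ψ) := hv.comp (O.symm.contDiff.add contDiff_const)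
  have hpre : Φ ⁻¹' Metric.ball 0 R = Metric.ball x₀ R := by
    ext x
    rw [mem_preimage, mem_ball_zero_iff, mem_ball_iff_norm, O.norm_map]
  have hfderiv : ∀ x, ‖fderiv ℝ (v ∘ Ψ) (Φ x)‖ₑ ≤ ‖fderiv ℝ v x‖ₑ := fun x => by
    have hΨ : HasFDerivAt Ψ (O.symm.toContinuousLinearEquiv : Spc n →L[ℝ] Spc n) (Φ x) :=
      O.symm.toContinuousLinearEquiv.hasFDerivAt.add_const x₀
    rw [((hv.differentiable one_ne_zero _).hasFDerivAt.comp (Φ x) hΨ).fderiv, hΨΦ,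
      enorm_le_iff_norm_le]
    refine ContinuousLinearMap.opNorm_le_bound _ (norm_nonneg _) fun y => ?_
    exact ((fderiv ℝ v x).le_opNorm _).trans_eq (congrArg _ (O.symm.norm_map y))
  calc ENNReal.ofReal δ * eLpNorm v (sobolevConj n) (volume.restrict (Φ ⁻¹' coordDeep n R δ))
      = ENNReal.ofReal δ *
          eLpNorm (v ∘ Ψ) (sobolevConj n) (volume.restrict (coordDeep n R δ)) := by
        rw [← eLpNorm_comp_measurePreserving hvΨ.continuous.aestronglyMeasurable
          (hΦ.restrict_preimage_emb hΦe _)]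
        simp only [Function.comp_def, hΨΦ]
    _ ≤ ∫⁻ y in Metric.ball 0 R, (‖(v ∘ Ψ) y‖ₑ + ENNReal.ofReal δ * ‖fderiv ℝ (v ∘ Ψ) y‖ₑ) :=
        eLpNorm_restrict_coordDeep_le hn hδ hδR hvΨ
    _ = ∫⁻ x in Metric.ball x₀ R, (‖v x‖ₑ + ENNReal.ofReal δ * ‖fderiv ℝ (v ∘ Ψ) (Φ x)‖ₑ) := by
        rw [← hpre, ← hΦ.setLIntegral_comp_preimage_emb hΦe]
        simp only [Function.comp_apply, hΨΦ]
    _ ≤ _ := by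
        gcongr
        exact hfderiv _

lemma exists_ball_subset_biUnion_preimage_coordDeep (hn : 1 ≤ n) :
    ∃ (c : ℝ) (T : Finset (Spc n ≃ₗᵢ[ℝ] Spc n)), 0 < c ∧ c ≤ 1 / 2 ∧
      ∀ (x₀ : Spc n) (R : ℝ), 0 < R →
        Metric.ball x₀ R ⊆ ⋃ O ∈ T, (fun x => O (x - x₀)) ⁻¹' coordDeep n R (c * R) := by
  obtain ⟨c, T, hc, hT⟩ := exists_finset_isometry_coord hn
  refine ⟨min c 1 / 2, T, by positivity, by gcongr; exact min_le_right c 1, fun x₀ R hR x hx => ?_⟩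
  obtain ⟨O, hO, hcoord⟩ := hT (x - x₀)
  refine mem_iUnion₂.2 ⟨O, hO, ?_, ?_⟩
  · rwa [O.norm_map, ← mem_ball_iff_norm]
  rw [O.norm_map, or_iff_not_imp_left, not_lt]
  intro hhalf i
  calc min c 1 / 2 * R = min c 1 * (R / 2) := by ring
    _ ≤ c * ‖x - x₀‖ := by gcongr; exact min_le_left c 1
    _ ≤ _ := hcoord i

lemma exists_eLpNorm_restrict_ball_le (n : ℕ) (F : Type*) [NormedAddCommGroup F]
    [NormedSpace ℝ F] (hn : 1 ≤ n) :
    ∃ C : NNReal, ∀ (x₀ : Spc n) (R : ℝ), 0 < R → ∀ v : Spc n → F, ContDiff ℝ 1 v →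
      ENNReal.ofReal R * eLpNorm v (sobolevConj n) (volume.restrict (Metric.ball x₀ R)) ≤
        C * ∫⁻ y in Metric.ball x₀ R, (‖v y‖ₑ + ENNReal.ofReal R * ‖fderiv ℝ v y‖ₑ) := by
  obtain ⟨c, T, hc, hc2, hcover⟩ := exists_ball_subset_biUnion_preimage_coordDeep hn
  refine ⟨c⁻¹.toNNReal * T.card, fun x₀ R hR v hv => ?_⟩
  set I := ∫⁻ y in Metric.ball x₀ R, (‖v y‖ₑ + ENNReal.ofReal R * ‖fderiv ℝ v y‖ₑ)
  set S : (Spc n ≃ₗᵢ[ℝ] Spc n) → Set (Spc n) := fun O =>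
    (fun x => O (x - x₀)) ⁻¹' coordDeep n R (c * R)
  have hS : ∀ O, MeasurableSet (S O) := fun O =>
    (by fun_prop : Measurable fun x => O (x - x₀)) measurableSet_coordDeep
  have hsum : ENNReal.ofReal (c * R) *
      eLpNorm v (sobolevConj n) (volume.restrict (Metric.ball x₀ R)) ≤ T.card * I := calc
    _ ≤ ∑ O ∈ T, ENNReal.ofReal (c * R) *
          eLpNorm v (sobolevConj n) (volume.restrict (S O)) := by
        rw [← Finset.mul_sum]
        gcongr
        exact eLpNorm_restrict_le_sum hv.continuous.aestronglyMeasurable one_le_sobolevConj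
          measurableSet_ball hS (hcover x₀ R hR)
    _ ≤ ∑ _O ∈ T, I := by
        refine Finset.sum_le_sum fun O _ => (eLpNorm_restrict_preimage_coordDeep_le hn
          (by positivity) (by nlinarith) hv x₀ O).trans ?_
        simp only [I]
        gcongr
        exact mul_le_of_le_one_left hR.le (by linarith)
    _ = T.card * I := by rw [Finset.sum_const, nsmul_eq_mul]
  calc ENNReal.ofReal R * eLpNorm v (sobolevConj n) (volume.restrict (Metric.ball x₀ R))
      = ENNReal.ofReal c⁻¹ * (ENNReal.ofReal (c * R) *
          eLpNorm v (sobolevConj n) (volume.restrict (Metric.ball x₀ R))) := by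
        rw [← mul_assoc, ← ENNReal.ofReal_mul (by positivity), inv_mul_cancel_left₀ hc.ne']
    _ ≤ ENNReal.ofReal c⁻¹ * (T.card * I) := by gcongr
    _ = _ := by
        rw [← mul_assoc, ENNReal.coe_mul, ENNReal.coe_natCast]
        rfl

end Gagliardo

section Normalised

open ProbabilityTheory

lemma isProbabilityMeasure_cond_ball {n : ℕ} (x₀ : Spc n) {ρ : ℝ} (hρ : 0 < ρ) :
    IsProbabilityMeasure (volume[|Metric.ball x₀ ρ]) :=
  cond_isProbabilityMeasure_of_finite (Metric.measure_ball_pos _ _ hρ).ne' measure_ball_lt_top.ne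

lemma volume_ball_rpow_inv_dim {n : ℕ} (hn : 1 ≤ n) (x₀ : Spc n) {ρ : ℝ} (hρ : 0 < ρ) :
    volume (Metric.ball x₀ ρ) ^ (1 / n : ℝ) =
      ENNReal.ofReal ρ * volume (Metric.ball (0 : Spc n) 1) ^ (1 / n : ℝ) := by
  have hn0 : (n : ℝ) ≠ 0 := by positivity
  rw [Measure.addHaar_ball_of_pos _ _ hρ, finrank_euclideanSpace_fin,
    ENNReal.mul_rpow_of_nonneg _ _ (by positivity), ENNReal.ofReal_pow hρ.le,
    ← ENNReal.rpow_natCast, ← ENNReal.rpow_mul, mul_one_div_cancel hn0, ENNReal.rpow_one]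

lemma exists_eLpNorm_cond_ball_le (n : ℕ) (F : Type*) [NormedAddCommGroup F] [NormedSpace ℝ F]
    (hn : 1 ≤ n) :
    ∃ K : NNReal, ∀ (x₀ : Spc n) (ρ : ℝ), 0 < ρ → ∀ v : Spc n → F, ContDiff ℝ 1 v →
      eLpNorm v (sobolevConj n) (volume[|Metric.ball x₀ ρ]) ≤
        K * ∫⁻ y, (‖v y‖ₑ + ENNReal.ofReal ρ * ‖fderiv ℝ v y‖ₑ) ∂volume[|Metric.ball x₀ ρ] := by
  obtain ⟨C, hC⟩ := exists_eLpNorm_restrict_ball_le n F hn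
  set ω := volume (Metric.ball (0 : Spc n) 1)
  have hω : ω ^ (1 / n : ℝ) ≠ ∞ :=
    ENNReal.rpow_ne_top_of_nonneg (by positivity) measure_ball_lt_top.ne
  refine ⟨C * (ω ^ (1 / n : ℝ)).toNNReal, fun x₀ ρ hρ v hv => ?_⟩
  rw [ENNReal.coe_mul, ENNReal.coe_toNNReal hω, ← ENNReal.mul_le_mul_iff_right
    (ENNReal.ofReal_pos.2 hρ).ne' ENNReal.ofReal_ne_top]
  set V := volume (Metric.ball x₀ ρ)
  have hV0 : V ≠ 0 := (Metric.measure_ball_pos _ _ hρ).ne'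
  have hV : V ≠ ∞ := measure_ball_lt_top.ne
  set I := ∫⁻ y in Metric.ball x₀ ρ, (‖v y‖ₑ + ENNReal.ofReal ρ * ‖fderiv ℝ v y‖ₑ)
  have hm : (0 : ℝ) ≤ 1 - 1 / n := by
    rw [sub_nonneg, div_le_one (by positivity)]; exact_mod_cast hn
  have hconj : (1 / sobolevConj n).toReal = 1 - 1 / n := by
    rw [sobolevConj, one_div, inv_inv, ENNReal.toReal_ofReal hm]
  have hVpow : V⁻¹ ^ (1 - 1 / n : ℝ) = V ^ (1 / n : ℝ) * V⁻¹ := by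
    rw [ENNReal.rpow_sub _ _ (ENNReal.inv_ne_zero.2 hV) (ENNReal.inv_ne_top.2 hV0),
      ENNReal.rpow_one, ENNReal.inv_rpow, div_eq_mul_inv, inv_inv, mul_comm]
  rw [ProbabilityTheory.cond, lintegral_smul_measure,
    eLpNorm_smul_measure_of_ne_zero (ENNReal.inv_ne_zero.2 hV), hconj]
  simp only [smul_eq_mul]
  calc ENNReal.ofReal ρ * (V⁻¹ ^ (1 - 1 / n : ℝ) * eLpNorm v (sobolevConj n) _)
      = V⁻¹ ^ (1 - 1 / n : ℝ) * (ENNReal.ofReal ρ * eLpNorm v (sobolevConj n) _) := by ring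
    _ ≤ V⁻¹ ^ (1 - 1 / n : ℝ) * (C * I) := mul_le_mul_right (hC x₀ ρ hρ v hv) _
    _ = _ := by rw [hVpow, volume_ball_rpow_inv_dim hn x₀ hρ]; ring

lemma exists_eLpNorm_rpow_le_lintegral_cond_ball (n : ℕ) (hn : 1 ≤ n) :
    ∃ K : NNReal, ∀ (x₀ : Spc n) (ρ : ℝ), 0 < ρ → ∀ v : Spc n → ℝ, ContDiff ℝ 1 v →
      ∀ m : ℝ, 0 ≤ m →
      eLpNorm v (sobolevConj n * ENNReal.ofReal (1 + m)) (volume[|Metric.ball x₀ ρ]) ^ (1 + m) ≤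
        K * ENNReal.ofReal (1 + m) * ∫⁻ y, ‖v y‖ₑ ^ m *
          (‖v y‖ₑ + ENNReal.ofReal ρ * ‖fderiv ℝ v y‖ₑ) ∂volume[|Metric.ball x₀ ρ] := by
  obtain ⟨K, hK⟩ := exists_eLpNorm_cond_ball_le n ℝ hn
  refine ⟨K, fun x₀ ρ hρ v hv m hm => ?_⟩
  rcases hm.eq_or_lt with rfl | hm0
  · simpa using hK x₀ ρ hρ v hv
  have hγ : 1 < 1 + m := lt_add_of_pos_right 1 hm0
  rw [← eLpNorm_norm_rpow v (by linarith), mul_assoc,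
    ← lintegral_const_mul' _ _ ENNReal.ofReal_ne_top]
  refine (hK x₀ ρ hρ _ (hv.norm_rpow hγ)).trans ?_
  gcongr with y
  have hchain := enorm_fderiv_norm_rpow_le (hv.differentiable one_ne_zero) (x := y)
    (Real.one_lt_toNNReal.2 hγ)
  rw [Real.coe_toNNReal _ (by linarith), add_sub_cancel_left] at hchain
  calc _ ≤ ENNReal.ofReal (1 + m) * (‖v y‖ₑ ^ m * ‖v y‖ₑ) + ENNReal.ofReal ρ *
        (ENNReal.ofReal (1 + m) * ‖v y‖ₑ ^ m * ‖fderiv ℝ v y‖ₑ) := by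
        gcongr
        · rw [Real.enorm_rpow_of_nonneg (norm_nonneg _) (by linarith), enorm_norm,
            add_comm, ENNReal.rpow_add_of_nonneg _ _ hm zero_le_one, ENNReal.rpow_one]
          exact le_mul_of_one_le_left zero_le (ENNReal.one_le_ofReal.2 (by linarith))
        · exact hchain
    _ = _ := by ring

lemma enorm_norm_add_mul_norm {E E' : Type*} [NormedAddCommGroup E] [NormedAddCommGroup E']
    {c : ℝ} (hc : 0 ≤ c) (a : E) (b : E') :
    ‖‖a‖ + c * ‖b‖‖ₑ = ‖a‖ₑ + ENNReal.ofReal c * ‖b‖ₑ := by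
  rw [Real.enorm_of_nonneg (by positivity), ENNReal.ofReal_add (by positivity) (by positivity),
    ENNReal.ofReal_mul hc, ofReal_norm, ofReal_norm]

lemma exists_weightedSobolev_cond_ball (n : ℕ) (hn : 1 ≤ n) :
    ∃ K : NNReal, ∀ (x₀ : Spc n) (ρ : ℝ), 0 < ρ → ∀ v : Spc n → ℝ, ContDiff ℝ 1 v →
      ∀ p q : ℝ, 1 ≤ q → WeightedSobolev v (volume[|Metric.ball x₀ ρ]) (1 / n) p q
        (K * ENNReal.ofReal (1 + p) * eLpNorm (fun y => ‖v y‖ + ρ * ‖fderiv ℝ v y‖)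
          (ENNReal.ofReal q) (volume[|Metric.ball x₀ ρ])) := by
  obtain ⟨K, hK⟩ := exists_eLpNorm_rpow_le_lintegral_cond_ball n hn
  refine ⟨K, fun x₀ ρ hρ v hv p q hq k hk hkp => ?_⟩
  have hq1 : 0 ≤ 1 - 1 / q := by rw [sub_nonneg, div_le_one (by linarith)]; exact hq
  have hm : 0 ≤ k * (1 - 1 / q) := by positivity
  have hmp : k * (1 - 1 / q) ≤ p := by
    have : 0 ≤ 1 / q := by positivity
    nlinarith
  have hw : Continuous fun y => ‖v y‖ + ρ * ‖fderiv ℝ v y‖ :=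
    hv.continuous.norm.add (continuous_const.mul (hv.continuous_fderiv one_ne_zero).norm)
  have hsob := hK x₀ ρ hρ v hv _ hm
  rw [sobolevConj, inv_ofReal_mul_ofReal _ (by linarith)] at hsob
  simp only [← enorm_norm_add_mul_norm hρ.le] at hsob
  refine hsob.trans ?_
  rw [mul_assoc, mul_assoc, mul_assoc]
  gcongr
  rw [mul_comm (eLpNorm _ _ _)]
  exact lintegral_enorm_rpow_mul_enorm_le hv.continuous.aestronglyMeasurable
    hw.aestronglyMeasurable hk hq

lemma memLp_cond_ball_of_continuous {n : ℕ} {F : Type*} [NormedAddCommGroup F] {v : Spc n → F}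
    (hv : Continuous v) (p : ℝ≥0∞) (x₀ : Spc n) (ρ : ℝ) :
    MemLp v p (volume[|Metric.ball x₀ ρ]) := by
  obtain ⟨M, hM⟩ := (isCompact_closedBall x₀ ρ).exists_bound_of_continuousOn hv.continuousOn
  refine MemLp.of_bound hv.aestronglyMeasurable M ?_
  filter_upwards [ae_cond_mem measurableSet_ball] with x hx
  exact hM x (Metric.ball_subset_closedBall hx)

lemma exists_eLpNorm_cond_ball_le_of_contDiff (n : ℕ) (hn : 1 ≤ n) :
    ∃ K : NNReal, ∀ p q r θ : ℝ, 0 < p → 1 ≤ q → 0 < r → θ ∈ Icc (0 : ℝ) 1 →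
      θ * (1 / q - 1 / n) + (1 - θ) * (1 / r) ≤ 1 / p →
      ∀ (x₀ : Spc n) (ρ : ℝ), 0 < ρ → ∀ v : Spc n → ℝ, ContDiff ℝ 1 v →
        eLpNorm v (ENNReal.ofReal p) (volume[|Metric.ball x₀ ρ]) ≤
          (K * ENNReal.ofReal (1 + p) * eLpNorm (fun y => ‖v y‖ + ρ * ‖fderiv ℝ v y‖)
            (ENNReal.ofReal q) (volume[|Metric.ball x₀ ρ])) ^ θ *
          eLpNorm v (ENNReal.ofReal r) (volume[|Metric.ball x₀ ρ]) ^ (1 - θ) := by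
  obtain ⟨K, hK⟩ := exists_weightedSobolev_cond_ball n hn
  refine ⟨K, fun p q r θ hp hq hr hθ hexp x₀ ρ hρ v hv => ?_⟩
  have := isProbabilityMeasure_cond_ball x₀ hρ
  have hn1 : (1 : ℝ) / n ≤ 1 := (div_le_one (by positivity)).2 (by exact_mod_cast hn)
  exact (hK x₀ ρ hρ v hv p q hq).eLpNorm_le_rpow_mul_rpow
    (memLp_cond_ball_of_continuous hv.continuous _ _ _) hn1 hp hq hr hθ hexp

end Normalised

section Mollification

variable {n : ℕ} {E : Type*} [NormedAddCommGroup E] [NormedSpace ℝ E] {f : Spc n → E}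
  (φ : ContDiffBump (0 : Spc n))

/-- The mollification `η * f` of `f` by the smooth kernel `η = φ / ∫ φ` of integral one, supported
in the closed ball of radius `φ.rOut` around the origin. -/
def mollify (f : Spc n → E) : Spc n → E :=
  convolution (φ.normed volume) f (ContinuousLinearMap.lsmul ℝ ℝ) volume

lemma mollify_apply (f : Spc n → E) (x : Spc n) :
    mollify φ f x = ∫ y, φ.normed volume (x - y) • f y := by
  rw [mollify, convolution_eq_swap]; rfl

lemma contDiff_mollify (hf : LocallyIntegrable f volume) : ContDiff ℝ 1 (mollify φ f) :=
  φ.hasCompactSupport_normed.contDiff_convolution_left (n := 1) _ φ.contDiff_normed hf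

lemma lintegral_enorm_normed : ∫⁻ y, ‖φ.normed volume y‖ₑ = 1 := by
  rw [← ofReal_integral_norm_eq_lintegral_enorm φ.integrable_normed]
  simp_rw [Real.norm_of_nonneg (φ.nonneg_normed _)]
  rw [φ.integral_normed, ENNReal.ofReal_one]

lemma enorm_mollify_rpow_le (hf : AEStronglyMeasurable f volume) {q : ℝ} (hq : 1 ≤ q)
    (x : Spc n) : ‖mollify φ f x‖ₑ ^ q ≤ ∫⁻ y, ‖φ.normed volume (x - y)‖ₑ * ‖f y‖ₑ ^ q := by
  have hκ : Measurable fun y => ‖φ.normed volume (x - y)‖ₑ :=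
    (φ.continuous_normed.comp (continuous_sub_left x)).enorm.measurable
  have hκ1 : ∫⁻ y, ‖φ.normed volume (x - y)‖ₑ = 1 := by
    rw [lintegral_sub_left_eq_self (fun y => ‖φ.normed volume y‖ₑ) x, lintegral_enorm_normed]
  refine le_trans ?_
    (lintegral_mul_rpow_le_of_lintegral_eq_one hκ.aemeasurable hf.enorm hκ1 hq)
  gcongr
  simpa only [mollify_apply, enorm_smul] using
    enorm_integral_le_lintegral_enorm fun y => φ.normed volume (x - y) • f y

lemma eLpNorm_mollify_le (hf : AEStronglyMeasurable f volume) {q : ℝ} (hq : 1 ≤ q) :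
    eLpNorm (mollify φ f) (ENNReal.ofReal q) volume ≤ eLpNorm f (ENNReal.ofReal q) volume := by
  have hq0 : 0 < q := by linarith
  have hη : Continuous (φ.normed (volume : Measure (Spc n))) := φ.continuous_normed
  have hmeas : AEMeasurable (Function.uncurry fun x y : Spc n =>
      ‖φ.normed volume (x - y)‖ₑ * ‖f y‖ₑ ^ q) (volume.prod volume) :=
    (hη.comp (continuous_fst.sub continuous_snd)).enorm.measurable.aemeasurable.mul
      (hf.enorm.pow_const q).comp_snd
  have hκ (y : Spc n) : Measurable fun x => ‖φ.normed volume (x - y)‖ₑ :=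
    (hη.comp (continuous_id.sub continuous_const)).enorm.measurable
  rw [← ENNReal.rpow_le_rpow_iff hq0, ← lintegral_enorm_rpow_eq hq0, ← lintegral_enorm_rpow_eq hq0]
  calc ∫⁻ x, ‖mollify φ f x‖ₑ ^ q
      ≤ ∫⁻ x, ∫⁻ y, ‖φ.normed volume (x - y)‖ₑ * ‖f y‖ₑ ^ q :=
        lintegral_mono (enorm_mollify_rpow_le φ hf hq)
    _ = ∫⁻ y, ∫⁻ x, ‖φ.normed volume (x - y)‖ₑ * ‖f y‖ₑ ^ q := lintegral_lintegral_swap hmeas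
    _ = ∫⁻ y, ‖f y‖ₑ ^ q := lintegral_congr fun y => by
        rw [lintegral_mul_const _ (hκ y),
          lintegral_sub_right_eq_self (fun x => ‖φ.normed volume x‖ₑ) y, lintegral_enorm_normed,
          one_mul]

lemma fderiv_mollify_apply (hf : LocallyIntegrable f volume) (x e : Spc n) :
    fderiv ℝ (mollify φ f) x e = ∫ y, fderiv ℝ (φ.normed volume) (x - y) e • f y := by
  have hη : ContDiff ℝ 1 (φ.normed (volume : Measure (Spc n))) := φ.contDiff_normed
  have hconv := (φ.hasCompactSupport_normed.fderiv ℝ).convolutionExists_left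
    ((ContinuousLinearMap.lsmul ℝ ℝ).precompL (Spc n)) (μ := volume)
    (hη.continuous_fderiv one_ne_zero) hf x
  rw [mollify, (φ.hasCompactSupport_normed.hasFDerivAt_convolution_left
      (ContinuousLinearMap.lsmul ℝ ℝ) hη hf x).fderiv, convolution_eq_swap,
    ContinuousLinearMap.integral_apply hconv.integrable_swap]
  rfl

lemma contDiff_normed_sub_left (x : Spc n) :
    ContDiff ℝ (⊤ : ℕ∞) fun y => φ.normed volume (x - y) :=
  φ.contDiff_normed.comp (contDiff_const.sub contDiff_id)

lemma hasCompactSupport_normed_sub_left (x : Spc n) :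
    HasCompactSupport fun y => φ.normed volume (x - y) :=
  φ.hasCompactSupport_normed.comp_homeomorph (Homeomorph.subLeft x)

lemma tsupport_normed_sub_left_subset {x₀ x : Spc n} {ρ : ℝ}
    (hx : x ∈ Metric.ball x₀ (ρ - φ.rOut)) :
    tsupport (fun y => φ.normed volume (x - y)) ⊆ Metric.ball x₀ ρ := by
  refine (tsupport_comp_subset_preimage (φ.normed volume) (continuous_sub_left x)).trans ?_
  rw [φ.tsupport_normed_eq]
  intro y hy
  have hxy : dist y x ≤ φ.rOut := by
    rw [dist_comm, dist_eq_norm]; exact mem_closedBall_zero_iff.1 hy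
  have := dist_triangle y x x₀
  rw [Metric.mem_ball] at hx ⊢
  linarith

lemma fderiv_normed_sub_left (x y e : Spc n) :
    fderiv ℝ (fun y => φ.normed volume (x - y)) y e =
      -fderiv ℝ (φ.normed volume) (x - y) e := by
  have hη : HasFDerivAt (φ.normed volume) (fderiv ℝ (φ.normed volume) (x - y)) (x - y) :=
    (φ.contDiff_normed.differentiable one_ne_zero (x - y)).hasFDerivAt
  have hcomp := hη.comp y ((hasFDerivAt_id y).const_sub x)
  rw [show (fun y => φ.normed volume (x - y)) = φ.normed volume ∘ HSub.hSub x from rfl,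
    hcomp.fderiv, ContinuousLinearMap.comp_neg, ContinuousLinearMap.comp_id]
  rfl

lemma mollify_indicator_apply_coord {s : Set (Spc n)} (hs : MeasurableSet s)
    {g : Spc n → Spc n} (hg : IntegrableOn g s) (x : Spc n) (i : Fin n) :
    mollify φ (s.indicator g) x i = ∫ y in s, g y i * φ.normed volume (x - y) := by
  have hconv : Integrable fun y => φ.normed volume (x - y) • s.indicator g y :=
    (φ.hasCompactSupport_normed.convolutionExists_left (ContinuousLinearMap.lsmul ℝ ℝ)
      φ.continuous_normed ((integrable_indicator_iff hs).2 hg).locallyIntegrable x).integrable_swap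
  rw [mollify_apply, ← integral_indicator hs]
  refine ((EuclideanSpace.proj (𝕜 := ℝ) i).integral_comp_comm hconv).symm.trans
    (integral_congr_ae (.of_forall fun y => ?_))
  by_cases hy : y ∈ s <;> simp [hy, mul_comm]

variable {x₀ x : Spc n} {ρ : ℝ} {u : Spc n → ℝ} {Du : Spc n → Spc n}

lemma fderiv_mollify_single (hu : IntegrableOn u (Metric.ball x₀ ρ))
    (hDu : IntegrableOn Du (Metric.ball x₀ ρ)) (hw : IsWeakGradOn x₀ ρ u Du)
    (hx : x ∈ Metric.ball x₀ (ρ - φ.rOut)) (i : Fin n) :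
    fderiv ℝ (mollify φ ((Metric.ball x₀ ρ).indicator u)) x (EuclideanSpace.single i 1) =
      mollify φ ((Metric.ball x₀ ρ).indicator Du) x i := by
  have hweak := hw _ (contDiff_normed_sub_left φ x)
    (hasCompactSupport_normed_sub_left φ x) (tsupport_normed_sub_left_subset φ hx) i
  have huI : Integrable ((Metric.ball x₀ ρ).indicator u) :=
    (integrable_indicator_iff measurableSet_ball).2 hu
  rw [fderiv_mollify_apply φ huI.locallyIntegrable,
    mollify_indicator_apply_coord φ measurableSet_ball hDu, ← neg_eq_iff_eq_neg.2 hweak,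
    ← integral_neg, ← integral_indicator measurableSet_ball]
  refine integral_congr_ae (.of_forall fun y => ?_)
  by_cases hy : y ∈ Metric.ball x₀ ρ
  · simp [hy, fderiv_normed_sub_left, mul_comm]
  · simp [hy]

lemma fderiv_mollify_eq_innerSL (hu : IntegrableOn u (Metric.ball x₀ ρ))
    (hDu : IntegrableOn Du (Metric.ball x₀ ρ)) (hw : IsWeakGradOn x₀ ρ u Du)
    (hx : x ∈ Metric.ball x₀ (ρ - φ.rOut)) :
    fderiv ℝ (mollify φ ((Metric.ball x₀ ρ).indicator u)) x =
      innerSL ℝ (mollify φ ((Metric.ball x₀ ρ).indicator Du) x) := by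
  refine ContinuousLinearMap.coe_injective
    ((EuclideanSpace.basisFun (Fin n) ℝ).toBasis.ext fun i => ?_)
  simpa [EuclideanSpace.inner_single_right] using fderiv_mollify_single φ hu hDu hw hx i

end Mollification

section Limit

open ProbabilityTheory

variable {α E : Type*} [MeasurableSpace α] [NormedAddCommGroup E] {μ : Measure α} {s t : Set α}

lemma cond_le_smul_cond (hst : s ⊆ t) (ht : μ t ≠ ∞) {c : ℝ≥0∞} (hc : c ≠ 0)
    (hts : μ t ≤ c * μ s) : μ[|s] ≤ c • μ[|t] := by
  rcases eq_or_ne (μ s) 0 with hs | -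
  · rw [cond_eq_zero_of_meas_eq_zero hs]
    exact Measure.zero_le _
  have hinv : (μ s)⁻¹ ≤ c * (μ t)⁻¹ := by
    rw [← div_eq_mul_inv, ENNReal.le_div_iff_mul_le (.inr hc) (.inl ht), mul_comm,
      ← div_eq_mul_inv]
    exact ENNReal.div_le_of_le_mul hts
  rw [ProbabilityTheory.cond, ProbabilityTheory.cond, smul_smul]
  exact fun A => by
    simp only [Measure.smul_apply, smul_eq_mul]
    exact mul_le_mul' hinv (Measure.restrict_mono hst le_rfl A)

lemma eLpNorm_cond_le_of_subset (f : α → E) {p : ℝ≥0∞} (hp : 1 ≤ p) (hst : s ⊆ t) (ht : μ t ≠ ∞)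
    {c : ℝ≥0∞} (hc : 1 ≤ c) (hts : μ t ≤ c * μ s) :
    eLpNorm f p (μ[|s]) ≤ c * eLpNorm f p (μ[|t]) := by
  have hc0 : c ≠ 0 := (zero_lt_one.trans_le hc).ne'
  refine (eLpNorm_mono_measure f (cond_le_smul_cond hst ht hc0 hts)).trans ?_
  rw [eLpNorm_smul_measure_of_ne_zero hc0, smul_eq_mul]
  gcongr
  have hp' : (1 / p).toReal ≤ 1 := by
    rw [one_div]
    exact ENNReal.toReal_mono ENNReal.one_ne_top (ENNReal.inv_le_one.2 hp)
  simpa using ENNReal.rpow_le_rpow_of_exponent_le hc hp'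

lemma eLpNorm_indicator_cond_le (f : α → E) (p : ℝ≥0∞) (hs : MeasurableSet s) (hst : s ⊆ t) :
    eLpNorm (s.indicator f) p (μ[|t]) ≤ eLpNorm f p (μ[|s]) := by
  rw [eLpNorm_indicator_eq_eLpNorm_restrict hs]
  refine eLpNorm_mono_measure f ?_
  rw [ProbabilityTheory.cond, ProbabilityTheory.cond, Measure.restrict_smul,
    Measure.restrict_restrict_of_subset hst]
  exact fun A => by
    simp only [Measure.smul_apply, smul_eq_mul]
    gcongr

lemma eLpNorm_norm_add_mul_norm_le {E' : Type*} [NormedAddCommGroup E'] {f : α → E} {g : α → E'}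
    (hf : AEStronglyMeasurable f μ) (hg : AEStronglyMeasurable g μ) {p : ℝ≥0∞} (hp : 1 ≤ p)
    {c : ℝ} (hc : 0 ≤ c) :
    eLpNorm (fun x => ‖f x‖ + c * ‖g x‖) p μ ≤
      eLpNorm f p μ + ENNReal.ofReal c * eLpNorm g p μ := by
  refine (eLpNorm_add_le hf.norm (hg.norm.const_mul c) hp).trans_eq ?_
  change eLpNorm (fun x => ‖f x‖) p μ + eLpNorm (c • fun x => ‖g x‖) p μ = _
  rw [eLpNorm_const_smul, eLpNorm_norm, eLpNorm_norm, Real.enorm_of_nonneg hc]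

lemma eLpNorm_mollify_indicator_cond_le {n : ℕ} {F : Type*} [NormedAddCommGroup F]
    [NormedSpace ℝ F] (φ : ContDiffBump (0 : Spc n)) {f : Spc n → F} {s : Set (Spc n)}
    (hs : MeasurableSet s) (hs' : volume s ≠ ∞) (hf : IntegrableOn f s)
    {q : ℝ} (hq : 1 ≤ q) :
    eLpNorm (mollify φ (s.indicator f)) (ENNReal.ofReal q) (volume[|s]) ≤
      eLpNorm f (ENNReal.ofReal q) (volume[|s]) := by
  have hinv : (volume s)⁻¹ ≠ 0 := ENNReal.inv_ne_zero.2 hs'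
  rw [ProbabilityTheory.cond, eLpNorm_smul_measure_of_ne_zero hinv,
    eLpNorm_smul_measure_of_ne_zero hinv]
  gcongr
  calc eLpNorm (mollify φ (s.indicator f)) (ENNReal.ofReal q) (volume.restrict s)
      ≤ eLpNorm (mollify φ (s.indicator f)) (ENNReal.ofReal q) volume :=
        eLpNorm_mono_measure _ Measure.restrict_le_self
    _ ≤ eLpNorm (s.indicator f) (ENNReal.ofReal q) volume :=
        eLpNorm_mollify_le φ ((integrable_indicator_iff hs).2 hf).aestronglyMeasurable hq
    _ = _ := eLpNorm_indicator_eq_eLpNorm_restrict hs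

lemma volume_ball_le_two_pow_mul {n : ℕ} (x₀ : Spc n) {ρ σ : ℝ} (hσ : 0 < σ) (hρ : ρ ≤ 2 * σ) :
    volume (Metric.ball x₀ ρ) ≤ 2 ^ n * volume (Metric.ball x₀ σ) := by
  refine (measure_mono (Metric.ball_subset_ball hρ)).trans_eq ?_
  rw [Measure.addHaar_ball_of_pos _ _ (by positivity : 0 < 2 * σ),
    Measure.addHaar_ball_of_pos _ _ hσ, finrank_euclideanSpace_fin, mul_pow,
    ENNReal.ofReal_mul (by positivity), mul_assoc, ENNReal.ofReal_pow zero_le_two,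
    ENNReal.ofReal_ofNat]

variable {n : ℕ} {x₀ : Spc n} {ρ : ℝ} {u : Spc n → ℝ} {Du : Spc n → Spc n}

lemma exists_contDiffBump_tendsto_mollify (hu : LocallyIntegrable u volume) (hρ : 0 < ρ) :
    ∃ φ : ℕ → ContDiffBump (0 : Spc n), (∀ k, (φ k).rOut ≤ ρ / 2) ∧
      Filter.Tendsto (fun k => (φ k).rOut) Filter.atTop (nhds 0) ∧
      ∀ᵐ x, Filter.Tendsto (fun k => mollify (φ k) u x) Filter.atTop (nhds (u x)) := by
  let φ : ℕ → ContDiffBump (0 : Spc n) := fun k =>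
    ⟨ρ / 4 / (k + 1), ρ / 2 / (k + 1), by positivity, by gcongr; norm_num⟩
  have hφ0 : Filter.Tendsto (fun k => (φ k).rOut) Filter.atTop (nhds 0) :=
    tendsto_const_nhds.div_atTop
      (Filter.tendsto_atTop_add_const_right _ _ tendsto_natCast_atTop_atTop)
  refine ⟨φ, fun k => div_le_self (by positivity) (by simp), hφ0,
    ContDiffBump.ae_convolution_tendsto_right_of_locallyIntegrable (K := 2) hφ0
      (.of_forall fun k => le_of_eq ?_) hu⟩
  change ρ / 2 / (k + 1) = 2 * (ρ / 4 / (k + 1))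
  ring

lemma eLpNorm_mollify_add_fderiv_cond_le (φ : ContDiffBump (0 : Spc n)) (hφ : φ.rOut ≤ ρ / 2)
    (hu : IntegrableOn u (Metric.ball x₀ ρ)) (hDu : IntegrableOn Du (Metric.ball x₀ ρ))
    (hw : IsWeakGradOn x₀ ρ u Du) {q : ℝ} (hq : 1 ≤ q) :
    eLpNorm (fun y => ‖mollify φ ((Metric.ball x₀ ρ).indicator u) y‖ + (ρ - φ.rOut) *
        ‖fderiv ℝ (mollify φ ((Metric.ball x₀ ρ).indicator u)) y‖) (ENNReal.ofReal q)
        (volume[|Metric.ball x₀ (ρ - φ.rOut)]) ≤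
      2 ^ n * (eLpNorm u (ENNReal.ofReal q) (volume[|Metric.ball x₀ ρ]) +
        ENNReal.ofReal ρ * eLpNorm Du (ENNReal.ofReal q) (volume[|Metric.ball x₀ ρ])) := by
  have hφ0 := φ.rOut_pos
  have hρ : 0 < ρ := by linarith
  have hσ : 0 < ρ - φ.rOut := by linarith
  have hq1 : 1 ≤ ENNReal.ofReal q := ENNReal.one_le_ofReal.2 hq
  set B := Metric.ball x₀ ρ
  have hB : volume B ≠ ∞ := measure_ball_lt_top.ne
  have huI : Integrable (B.indicator u) := (integrable_indicator_iff measurableSet_ball).2 hu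
  have hDuI : Integrable (B.indicator Du) := (integrable_indicator_iff measurableSet_ball).2 hDu
  set w := mollify φ (B.indicator u)
  set W := mollify φ (B.indicator Du)
  have hwm : AEStronglyMeasurable w (volume[|B]) :=
    (contDiff_mollify φ huI.locallyIntegrable).continuous.aestronglyMeasurable
  have hWm : AEStronglyMeasurable W (volume[|B]) :=
    (contDiff_mollify φ hDuI.locallyIntegrable).continuous.aestronglyMeasurable
  calc eLpNorm (fun y => ‖w y‖ + (ρ - φ.rOut) * ‖fderiv ℝ w y‖) (ENNReal.ofReal q)
        (volume[|Metric.ball x₀ (ρ - φ.rOut)])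
      ≤ eLpNorm (fun y => ‖w y‖ + ρ * ‖W y‖) (ENNReal.ofReal q)
        (volume[|Metric.ball x₀ (ρ - φ.rOut)]) := by
        refine eLpNorm_mono_ae_real ?_
        filter_upwards [ae_cond_mem measurableSet_ball] with y hy
        rw [fderiv_mollify_eq_innerSL φ hu hDu hw hy, innerSL_apply_norm,
          Real.norm_of_nonneg (by positivity)]
        gcongr
        exact sub_le_self _ hφ0.le
    _ ≤ 2 ^ n * eLpNorm (fun y => ‖w y‖ + ρ * ‖W y‖) (ENNReal.ofReal q) (volume[|B]) :=
        eLpNorm_cond_le_of_subset _ hq1 (Metric.ball_subset_ball (by linarith)) hB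
          (one_le_pow₀ one_le_two) (volume_ball_le_two_pow_mul x₀ hσ (by linarith))
    _ ≤ 2 ^ n * (eLpNorm w (ENNReal.ofReal q) (volume[|B]) +
          ENNReal.ofReal ρ * eLpNorm W (ENNReal.ofReal q) (volume[|B])) := by
        gcongr
        exact eLpNorm_norm_add_mul_norm_le hwm hWm hq1 hρ.le
    _ ≤ _ := by
        gcongr
        · exact eLpNorm_mollify_indicator_cond_le φ measurableSet_ball hB hu hq
        · exact eLpNorm_mollify_indicator_cond_le φ measurableSet_ball hB hDu hq

lemma eLpNorm_le_of_mollify_le (hρ : 0 < ρ) (hu : IntegrableOn u (Metric.ball x₀ ρ)) {p : ℝ≥0∞}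
    {C : ℝ≥0∞} (hC : ∀ φ : ContDiffBump (0 : Spc n), φ.rOut ≤ ρ / 2 →
      eLpNorm (mollify φ ((Metric.ball x₀ ρ).indicator u)) p
        (volume[|Metric.ball x₀ (ρ - φ.rOut)]) ≤ C) :
    eLpNorm u p (volume[|Metric.ball x₀ ρ]) ≤ C := by
  have huI : Integrable ((Metric.ball x₀ ρ).indicator u) :=
    (integrable_indicator_iff measurableSet_ball).2 hu
  obtain ⟨φ, hφ, hφ0, hlim⟩ := exists_contDiffBump_tendsto_mollify huI.locallyIntegrable hρ
  have hcont (k : ℕ) : Continuous (mollify (φ k) ((Metric.ball x₀ ρ).indicator u)) :=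
    (contDiff_mollify (φ k) huI.locallyIntegrable).continuous
  refine Lp.eLpNorm_le_of_ae_tendsto (u := Filter.atTop)
    (f := fun k => (Metric.ball x₀ (ρ - (φ k).rOut)).indicator
      (mollify (φ k) ((Metric.ball x₀ ρ).indicator u)))
    (.of_forall fun k => (eLpNorm_indicator_cond_le _ _ measurableSet_ball
      (Metric.ball_subset_ball (sub_le_self _ (φ k).rOut_pos.le))).trans (hC (φ k) (hφ k)))
    (fun k => (hcont k).aestronglyMeasurable.indicator measurableSet_ball) ?_
  filter_upwards [cond_absolutelyContinuous.ae_le hlim, ae_cond_mem measurableSet_ball]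
    with x hx hxB
  rw [indicator_of_mem hxB] at hx
  refine hx.congr' ?_
  filter_upwards [hφ0.eventually (gt_mem_nhds (sub_pos.2 (Metric.mem_ball.1 hxB)))] with k hk
  exact (indicator_of_mem (Metric.mem_ball.2 (by linarith)) _).symm

lemma exists_eLpNorm_cond_ball_le_of_isWeakGradOn (n : ℕ) (hn : 1 ≤ n) :
    ∃ K : NNReal, ∀ p q r θ : ℝ, 0 < p → 1 ≤ q → 1 ≤ r → θ ∈ Icc (0 : ℝ) 1 →
      θ * (1 / q - 1 / n) + (1 - θ) * (1 / r) ≤ 1 / p →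
      ∀ (x₀ : Spc n) (ρ : ℝ), 0 < ρ → ∀ (u : Spc n → ℝ) (Du : Spc n → Spc n),
        IntegrableOn u (Metric.ball x₀ ρ) → IntegrableOn Du (Metric.ball x₀ ρ) →
        IsWeakGradOn x₀ ρ u Du →
        eLpNorm u (ENNReal.ofReal p) (volume[|Metric.ball x₀ ρ]) ≤
          (K * ENNReal.ofReal (1 + p) * (eLpNorm u (ENNReal.ofReal q) (volume[|Metric.ball x₀ ρ]) +
            ENNReal.ofReal ρ *
              eLpNorm Du (ENNReal.ofReal q) (volume[|Metric.ball x₀ ρ]))) ^ θ *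
          (2 ^ n * eLpNorm u (ENNReal.ofReal r) (volume[|Metric.ball x₀ ρ])) ^ (1 - θ) := by
  obtain ⟨K, hK⟩ := exists_eLpNorm_cond_ball_le_of_contDiff n hn
  refine ⟨K * 2 ^ n, fun p q r θ hp hq hr hθ hexp x₀ ρ hρ u Du hu hDu hw =>
    eLpNorm_le_of_mollify_le hρ hu fun φ hφ => ?_⟩
  have hφ0 := φ.rOut_pos
  have hσ : 0 < ρ - φ.rOut := by linarith
  have huI : Integrable ((Metric.ball x₀ ρ).indicator u) :=
    (integrable_indicator_iff measurableSet_ball).2 hu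
  refine (hK p q r θ hp hq (by linarith) hθ hexp x₀ _ hσ _
    (contDiff_mollify φ huI.locallyIntegrable)).trans ?_
  refine mul_le_mul' (ENNReal.rpow_le_rpow ?_ hθ.1) (ENNReal.rpow_le_rpow ?_ (sub_nonneg.2 hθ.2))
  · rw [ENNReal.coe_mul, ENNReal.coe_pow, ENNReal.coe_ofNat, mul_right_comm (K : ℝ≥0∞) (2 ^ n),
      mul_assoc (K * ENNReal.ofReal (1 + p))]
    exact mul_le_mul_right (eLpNorm_mollify_add_fderiv_cond_le φ hφ hu hDu hw hq) _
  · refine (eLpNorm_cond_le_of_subset _ (ENNReal.one_le_ofReal.2 hr)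
      (Metric.ball_subset_ball (sub_le_self _ hφ0.le)) measure_ball_lt_top.ne
      (one_le_pow₀ one_le_two) (volume_ball_le_two_pow_mul x₀ hσ (by linarith))).trans ?_
    gcongr
    exact eLpNorm_mollify_indicator_cond_le φ measurableSet_ball measure_ball_lt_top.ne hu hr

end Limit

section Averages

open ProbabilityTheory

variable {α F : Type*} [MeasurableSpace α] [NormedAddCommGroup F] {μ : Measure α}
  {u : α → ℝ} {p q r ρ θ : ℝ}

lemma integral_abs_rpow_div_rpow (hp : 0 < p) (hρ : 0 ≤ ρ) (hu : MemLp u (ENNReal.ofReal p) μ) :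
    ∫ x, |u x| ^ p / ρ ^ p ∂μ = ((eLpNorm u (ENNReal.ofReal p) μ).toReal / ρ) ^ p := by
  simp only [← Real.norm_eq_abs]
  rw [integral_div, integral_norm_rpow_eq hp hu, Real.div_rpow ENNReal.toReal_nonneg hρ]

lemma integral_abs_rpow_div_rpow_add_norm_rpow {g : α → F} (hp : 0 < p) (hρ : 0 ≤ ρ)
    (hu : MemLp u (ENNReal.ofReal p) μ) (hg : MemLp g (ENNReal.ofReal p) μ) :
    ∫ x, (|u x| ^ p / ρ ^ p + ‖g x‖ ^ p) ∂μ =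
      ((eLpNorm u (ENNReal.ofReal p) μ).toReal / ρ) ^ p +
        (eLpNorm g (ENNReal.ofReal p) μ).toReal ^ p := by
  rw [integral_add (f := fun x => |u x| ^ p / ρ ^ p)
    ((integrable_norm_rpow_of_memLp hp hu).div_const _) (integrable_norm_rpow_of_memLp hp hg),
    integral_norm_rpow_eq hp hg, integral_abs_rpow_div_rpow hp hρ hu]

lemma memLp_cond {f : α → F} {p : ℝ≥0∞} {s : Set α} (hs : μ s ≠ 0)
    (hf : MemLp f p (μ.restrict s)) : MemLp f p (μ[|s]) :=
  hf.smul_measure (ENNReal.inv_ne_top.2 hs)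

lemma memLp_restrict_of_memLp_cond {f : α → F} {p : ℝ≥0∞} {s : Set α} (hs : μ s ≠ ∞)
    (hf : MemLp f p (μ[|s])) : MemLp f p (μ.restrict s) := by
  rcases eq_or_ne (μ s) 0 with hs0 | hs0
  · rw [Measure.restrict_zero_set hs0]
    exact memLp_measure_zero
  have h := hf.smul_measure hs
  rwa [ProbabilityTheory.cond, smul_smul, ENNReal.mul_inv_cancel hs0 hs, one_smul] at h

lemma mul_sub_add_mul_le_of_neg_div_le {n : ℕ} (hn : 1 ≤ n)
    (h : -(n / p) ≤ θ * (1 - n / q) - (1 - θ) * (n / r)) :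
    θ * (1 / q - 1 / n) + (1 - θ) * (1 / r) ≤ 1 / p := by
  have hn0 : (0 : ℝ) < n := by exact_mod_cast hn
  refine le_of_mul_le_mul_left ?_ hn0
  calc n * (θ * (1 / q - 1 / n) + (1 - θ) * (1 / r))
      = -(θ * (1 - n / q) - (1 - θ) * (n / r)) := by
        rw [mul_add, mul_left_comm, mul_sub, mul_one_div_cancel hn0.ne']
        ring
    _ ≤ n / p := neg_le.1 h
    _ = n * (1 / p) := (mul_one_div _ _).symm

lemma ne_top_and_toReal_le_of_le_rpow_mul_rpow {a b d e : ℝ≥0∞} {L M : NNReal} (hρ : 0 ≤ ρ)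
    (hθ : θ ∈ Icc (0 : ℝ) 1) (hb : b ≠ ∞) (hd : d ≠ ∞) (he : e ≠ ∞)
    (h : a ≤ (L * (b + ENNReal.ofReal ρ * d)) ^ θ * (M * e) ^ (1 - θ)) :
    a ≠ ∞ ∧ a.toReal ≤ (L * (b.toReal + ρ * d.toReal)) ^ θ * (M * e.toReal) ^ (1 - θ) := by
  lift b to NNReal using hb
  lift d to NNReal using hd
  lift e to NNReal using he
  lift ρ to NNReal using hρ
  rw [ENNReal.ofReal_coe_nnreal] at h
  norm_cast at h
  rw [← ENNReal.coe_rpow_of_nonneg _ hθ.1, ← ENNReal.coe_rpow_of_nonneg _ (sub_nonneg.2 hθ.2)] at h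
  norm_cast at h
  refine ⟨ne_top_of_le_ne_top ENNReal.coe_ne_top h, ?_⟩
  simpa using ENNReal.toReal_mono ENNReal.coe_ne_top h

lemma add_le_two_mul_rpow_add_rpow {b d : ℝ} (hb : 0 ≤ b) (hd : 0 ≤ d) (hq : 0 < q) :
    b + d ≤ 2 * (b ^ q + d ^ q) ^ q⁻¹ := by
  have hbW : b ≤ (b ^ q + d ^ q) ^ q⁻¹ := by
    rw [Real.le_rpow_inv_iff_of_pos hb (by positivity) hq]
    exact le_add_of_nonneg_right (by positivity)
  have hdW : d ≤ (b ^ q + d ^ q) ^ q⁻¹ := by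
    rw [Real.le_rpow_inv_iff_of_pos hd (by positivity) hq]
    exact le_add_of_nonneg_left (by positivity)
  linarith

lemma div_le_max_mul_of_le_rpow_mul_rpow {a b e L M : ℝ} (hb : 0 ≤ b) (he : 0 ≤ e) (hL : 0 ≤ L)
    (hM : 0 ≤ M) (hρ : 0 < ρ) (hθ : θ ∈ Icc (0 : ℝ) 1) (h : a ≤ (L * b) ^ θ * (M * e) ^ (1 - θ)) :
    a / ρ ≤ max L M * ((b / ρ) ^ θ * (e / ρ) ^ (1 - θ)) := by
  have hθ₀ : 0 ≤ θ := hθ.1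
  have hθ₁ : 0 ≤ 1 - θ := sub_nonneg.2 hθ.2
  have hA : 0 ≤ max L M := le_max_of_le_left hL
  have hsplit {x : ℝ} (hx : 0 ≤ x) : x ^ θ * x ^ (1 - θ) = x := by
    rw [← Real.rpow_add_of_nonneg hx hθ₀ hθ₁, add_sub_cancel, Real.rpow_one]
  calc a / ρ ≤ (max L M * b) ^ θ * (max L M * e) ^ (1 - θ) / ρ := by
        refine div_le_div_of_nonneg_right (h.trans ?_) hρ.le
        gcongr
        exacts [le_max_left _ _, le_max_right _ _]
    _ = (max L M ^ θ * max L M ^ (1 - θ)) * (b ^ θ * e ^ (1 - θ) / (ρ ^ θ * ρ ^ (1 - θ))) := by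
        rw [hsplit hρ.le, Real.mul_rpow hA hb, Real.mul_rpow hA he]
        ring
    _ = max L M * ((b / ρ) ^ θ * (e / ρ) ^ (1 - θ)) := by
        rw [hsplit hA, mul_div_mul_comm, Real.div_rpow hb hρ.le, Real.div_rpow he hρ.le]

lemma div_rpow_le_of_le_rpow_mul_rpow {a b d e L M : ℝ} (ha : 0 ≤ a) (hb : 0 ≤ b) (hd : 0 ≤ d)
    (he : 0 ≤ e) (hL : 0 ≤ L) (hM : 0 ≤ M) (hρ : 0 < ρ) (hp : 0 ≤ p) (hq : 0 < q) (hr : 0 < r)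
    (hθ : θ ∈ Icc (0 : ℝ) 1) (h : a ≤ (L * (b + ρ * d)) ^ θ * (M * e) ^ (1 - θ)) :
    (a / ρ) ^ p ≤ max (L * 2) M ^ p * ((b / ρ) ^ q + d ^ q) ^ (θ * p / q) *
      ((e / ρ) ^ r) ^ ((1 - θ) * p / r) := by
  set W := ((b / ρ) ^ q + d ^ q) ^ q⁻¹ with hWdef
  have hW : 0 ≤ W := by positivity
  have hsum : b + ρ * d ≤ 2 * (ρ * W) := calc
    b + ρ * d = ρ * (b / ρ + d) := by rw [mul_add, mul_div_cancel₀ _ hρ.ne']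
    _ ≤ ρ * (2 * W) := by gcongr; exact add_le_two_mul_rpow_add_rpow (by positivity) hd hq
    _ = 2 * (ρ * W) := mul_left_comm _ _ _
  have hle : a / ρ ≤ max (L * 2) M * (W ^ θ * (e / ρ) ^ (1 - θ)) := by
    have h' : a ≤ (L * 2 * (ρ * W)) ^ θ * (M * e) ^ (1 - θ) := h.trans <| by
      have := hθ.1
      rw [mul_assoc L]
      gcongr
    have := div_le_max_mul_of_le_rpow_mul_rpow (by positivity) he (by positivity) hM hρ hθ h'
    rwa [mul_div_cancel_left₀ _ hρ.ne'] at this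
  have heρ : 0 ≤ e / ρ := by positivity
  calc (a / ρ) ^ p ≤ (max (L * 2) M * (W ^ θ * (e / ρ) ^ (1 - θ))) ^ p := by gcongr
    _ = max (L * 2) M ^ p * (W ^ (θ * p)) * (e / ρ) ^ ((1 - θ) * p) := by
        rw [Real.mul_rpow (by positivity) (by positivity),
          Real.mul_rpow (by positivity) (by positivity), ← Real.rpow_mul hW, ← Real.rpow_mul heρ,
          mul_assoc]
    _ = _ := by
        rw [hWdef, ← Real.rpow_mul (by positivity), ← Real.rpow_mul heρ, mul_div_cancel₀ _ hr.ne',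
          inv_mul_eq_div]

lemma memLp_and_setAverage_le_of_eLpNorm_cond_le {n : ℕ} {x₀ : Spc n} {u : Spc n → ℝ}
    {Du : Spc n → Spc n} {L M : NNReal} (hp : 0 < p) (hq : 0 < q) (hr : 0 < r)
    (hθ : θ ∈ Icc (0 : ℝ) 1) (hρ : 0 < ρ)
    (hu : MemLp u (ENNReal.ofReal q) (volume.restrict (Metric.ball x₀ ρ)))
    (hDu : MemLp Du (ENNReal.ofReal q) (volume.restrict (Metric.ball x₀ ρ)))
    (hur : MemLp u (ENNReal.ofReal r) (volume.restrict (Metric.ball x₀ ρ)))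
    (h : eLpNorm u (ENNReal.ofReal p) (volume[|Metric.ball x₀ ρ]) ≤
      (L * (eLpNorm u (ENNReal.ofReal q) (volume[|Metric.ball x₀ ρ]) + ENNReal.ofReal ρ *
        eLpNorm Du (ENNReal.ofReal q) (volume[|Metric.ball x₀ ρ]))) ^ θ *
      (M * eLpNorm u (ENNReal.ofReal r) (volume[|Metric.ball x₀ ρ])) ^ (1 - θ)) :
    MemLp u (ENNReal.ofReal p) (volume.restrict (Metric.ball x₀ ρ)) ∧
    ⨍ x in Metric.ball x₀ ρ, |u x| ^ p / ρ ^ p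
      ≤ (max (L * 2) M : ℝ) ^ p *
        (⨍ x in Metric.ball x₀ ρ, (|u x| ^ q / ρ ^ q + ‖Du x‖ ^ q)) ^ (θ * p / q) *
        (⨍ x in Metric.ball x₀ ρ, |u x| ^ r / ρ ^ r) ^ ((1 - θ) * p / r) := by
  have hB : volume (Metric.ball x₀ ρ) ≠ 0 := (Metric.measure_ball_pos _ _ hρ).ne'
  have huν := memLp_cond hB hu
  have hDuν := memLp_cond hB hDu
  have hurν := memLp_cond hB hur
  obtain ⟨hfin, hle⟩ :=
    ne_top_and_toReal_le_of_le_rpow_mul_rpow hρ.le hθ huν.2.ne hDuν.2.ne hurν.2.ne h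
  have hupν : MemLp u (ENNReal.ofReal p) (volume[|Metric.ball x₀ ρ]) := ⟨huν.1, hfin.lt_top⟩
  refine ⟨memLp_restrict_of_memLp_cond measure_ball_lt_top.ne hupν, ?_⟩
  rw [setAverage_eq', setAverage_eq', setAverage_eq', ← ProbabilityTheory.cond,
    integral_abs_rpow_div_rpow hp hρ.le hupν, integral_abs_rpow_div_rpow hr hρ.le hurν,
    integral_abs_rpow_div_rpow_add_norm_rpow hq hρ.le huν hDuν]
  exact div_rpow_le_of_le_rpow_mul_rpow ENNReal.toReal_nonneg ENNReal.toReal_nonneg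
    ENNReal.toReal_nonneg ENNReal.toReal_nonneg L.2 M.2 hρ hp.le hq hr hθ hle

end Averages

theorem gagliardo_nirenberg_general (n : ℕ) (p : ℝ) (hn : 1 ≤ n) (hp : 0 < p) :
    ∃ c : ℝ, 0 < c ∧ ∀ (q r θ : ℝ), 1 ≤ q → 1 ≤ r → θ ∈ Icc (0 : ℝ) 1 →
      -(n / p) ≤ θ * (1 - n / q) - (1 - θ) * (n / r) →
      ∀ (x₀ : Spc n) (ρ : ℝ), 0 < ρ →
      ∀ (u : Spc n → ℝ) (Du : Spc n → Spc n),
        MemLp u (ENNReal.ofReal q) (volume.restrict (Metric.ball x₀ ρ)) →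
        MemLp Du (ENNReal.ofReal q) (volume.restrict (Metric.ball x₀ ρ)) →
        MemLp u (ENNReal.ofReal r) (volume.restrict (Metric.ball x₀ ρ)) →
        IsWeakGradOn x₀ ρ u Du →
        MemLp u (ENNReal.ofReal p) (volume.restrict (Metric.ball x₀ ρ)) ∧
        ⨍ x in Metric.ball x₀ ρ, |u x| ^ p / ρ ^ p
          ≤ c * (⨍ x in Metric.ball x₀ ρ, (|u x| ^ q / ρ ^ q + ‖Du x‖ ^ q)) ^ (θ * p / q)
              * (⨍ x in Metric.ball x₀ ρ, |u x| ^ r / ρ ^ r) ^ ((1 - θ) * p / r) := by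
  obtain ⟨K, hK⟩ := exists_eLpNorm_cond_ball_le_of_isWeakGradOn n hn
  refine ⟨max (K * (1 + p).toNNReal * 2) (2 ^ n) ^ p, by positivity,
    fun q r θ hq hr hθ hexp x₀ ρ hρ u Du hu hDu hur hw => ?_⟩
  have : IsFiniteMeasure (volume.restrict (Metric.ball x₀ ρ)) :=
    isFiniteMeasure_restrict.2 measure_ball_lt_top.ne
  have hnorm := hK p q r θ hp hq hr hθ (mul_sub_add_mul_le_of_neg_div_le hn hexp) x₀ ρ hρ u Du
    (hu.integrable (ENNReal.one_le_ofReal.2 hq)) (hDu.integrable (ENNReal.one_le_ofReal.2 hq)) hw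
  have havg := memLp_and_setAverage_le_of_eLpNorm_cond_le (L := K * (1 + p).toNNReal) (M := 2 ^ n)
    hp (zero_lt_one.trans_le hq) (zero_lt_one.trans_le hr) hθ hρ hu hDu hur
    (by push_cast; exact hnorm)
  simpa using havg

/-- Gagliardo–Nirenberg inequality on balls: let `1 ≤ p, q, r < ∞` and `θ ∈ (0,1)` satisfy
`−n/p ≤ θ(1 − n/q) − (1 − θ) n/r`. Then there exists `c = c(n, p)` such that for any ball
`B_ρ(x₀) ⊂ ℝ^n`, `ρ > 0`, and any `u ∈ W^{1,q}(B_ρ(x₀))` with `u ∈ L^r(B_ρ(x₀))`: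
`⨍ |u|^p/ρ^p ≤ c [⨍ (|u|^q/ρ^q + |Du|^q)]^{θp/q} [⨍ |u|^r/ρ^r]^{(1−θ)p/r}`. -/
theorem gagliardo_nirenberg (n : ℕ) (p : ℝ) (hn : 1 ≤ n) (hp : 1 ≤ p) :
    ∃ c : ℝ, 0 < c ∧ ∀ (q r θ : ℝ), 1 ≤ q → 1 ≤ r → θ ∈ Ioo (0 : ℝ) 1 →
      -(n / p) ≤ θ * (1 - n / q) - (1 - θ) * (n / r) →
      ∀ (x₀ : Spc n) (ρ : ℝ), 0 < ρ →
      ∀ (u : Spc n → ℝ) (Du : Spc n → Spc n),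
        MemLp u (ENNReal.ofReal q) (volume.restrict (Metric.ball x₀ ρ)) →
        MemLp Du (ENNReal.ofReal q) (volume.restrict (Metric.ball x₀ ρ)) →
        MemLp u (ENNReal.ofReal r) (volume.restrict (Metric.ball x₀ ρ)) →
        IsWeakGradOn x₀ ρ u Du →
        ⨍ x in Metric.ball x₀ ρ, |u x| ^ p / ρ ^ p
          ≤ c * (⨍ x in Metric.ball x₀ ρ, (|u x| ^ q / ρ ^ q + ‖Du x‖ ^ q)) ^ (θ * p / q)
              * (⨍ x in Metric.ball x₀ ρ, |u x| ^ r / ρ ^ r) ^ ((1 - θ) * p / r) := by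
  obtain ⟨c, hc, h⟩ := gagliardo_nirenberg_general n p hn (zero_lt_one.trans_le hp)
  exact ⟨c, hc, fun q r θ hq hr hθ hexp x₀ ρ hρ u Du hu hDu hur hw =>
    (h q r θ hq hr (Ioo_subset_Icc_self hθ) hexp x₀ ρ hρ u Du hu hDu hur hw).2⟩
end
end
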